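/- Let M be a triangulated Möbius strip with no interior vertices. Then M has at least one interior edge, and moreover by repeatedly cutting along separating interior edges one obtains a Möbius strip M' (a subcomplex of M, still without interior vertices) in which every interior edge is non-separating. -/

import Mathlib

open Finset

/-- An abstract simplicial complex on vertex type `V`, given by its finite set of
(nonempty) faces, closed under taking nonempty subsets. -/
structure SComplex (V : Type) [DecidableEq V] where
  faces : Finset (Finset V)
  nonempty_of_mem : ∀ σ ∈ faces, σ.Nonempty
  down_closed : ∀ σ ∈ faces, ∀ τ ⊆ σ, τ.Nonempty → τ ∈ faces

namespace SComplex

variable {V : Type} [DecidableEq V]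

/-- the number `f_k` of `k`-dimensional faces -/
def fNum (K : SComplex V) (k : ℕ) : ℕ := (K.faces.filter fun σ => σ.card = k + 1).card

/-- `g₂` of a `d`-dimensional complex: `f₁ - (d+1) f₀ + C(d+2,2)` -/
def g2 (K : SComplex V) (d : ℕ) : ℤ :=
  (K.fNum 1 : ℤ) - (d + 1) * (K.fNum 0 : ℤ) + (Nat.choose (d + 2) 2 : ℤ)

/-- the vertex set of a complex -/
def vertices (K : SComplex V) : Finset V := K.faces.sup id

/-- the link of a face `σ` -/
def link (K : SComplex V) (σ : Finset V) : SComplex V where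
  faces := K.faces.filter fun τ => σ ∩ τ = ∅ ∧ σ ∪ τ ∈ K.faces
  nonempty_of_mem τ hτ := K.nonempty_of_mem τ (mem_filter.mp hτ).1
  down_closed := by
    intro τ hτ ρ hρ hne
    rw [mem_filter] at hτ ⊢
    obtain ⟨h1, h2, h3⟩ := hτ
    refine ⟨K.down_closed τ h1 ρ hρ hne, subset_empty.mp ?_, 
      K.down_closed _ h3 _ (union_subset_union Subset.rfl hρ) ?_⟩
    · exact h2 ▸ inter_subset_inter Subset.rfl hρ
    · obtain ⟨w, hw⟩ := hne
      exact ⟨w, mem_union_right _ hw⟩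

/-- the (closed) star of a vertex `t` -/
def star (K : SComplex V) (t : V) : SComplex V where
  faces := K.faces.filter fun τ => insert t τ ∈ K.faces
  nonempty_of_mem τ hτ := K.nonempty_of_mem τ (mem_filter.mp hτ).1
  down_closed := by
    intro τ hτ ρ hρ hne
    rw [mem_filter] at hτ ⊢
    exact ⟨K.down_closed τ hτ.1 ρ hρ hne,
      K.down_closed _ hτ.2 _ (insert_subset_insert _ hρ) (insert_nonempty _ _)⟩

/-- connectivity of a complex (through edges) -/
def Connected (K : SComplex V) : Prop :=
  ∀ u ∈ K.vertices, ∀ w ∈ K.vertices,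
    Relation.ReflTransGen (fun a b => ({a, b} : Finset V) ∈ K.faces) u w

/-- purity: every face is contained in a `d`-dimensional face -/
def Pure (K : SComplex V) (d : ℕ) : Prop :=
  ∀ σ ∈ K.faces, ∃ τ ∈ K.faces, σ ⊆ τ ∧ τ.card = d + 1

/-- strong connectivity through facets sharing `(d-1)`-faces -/
def StronglyConnected (K : SComplex V) (d : ℕ) : Prop :=
  ∀ σ ∈ K.faces, ∀ τ ∈ K.faces, σ.card = d + 1 → τ.card = d + 1 →
    Relation.ReflTransGen
      (fun a b => a ∈ K.faces ∧ b ∈ K.faces ∧ a.card = d + 1 ∧ b.card = d + 1 ∧ (a ∩ b).card = d)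
      σ τ

/-- `K` is a `d`-dimensional pseudomanifold -/
def IsPseudomanifold (K : SComplex V) (d : ℕ) : Prop :=
  K.Pure d ∧
  (∀ σ ∈ K.faces, σ.card = d →
    (K.faces.filter fun τ => σ ⊆ τ ∧ τ.card = d + 1).card = 2) ∧
  K.StronglyConnected d

/-- `K` is a `d`-dimensional normal pseudomanifold: a pseudomanifold all of whose
faces of codimension at least two have connected links -/
def IsNormal (K : SComplex V) (d : ℕ) : Prop :=
  K.IsPseudomanifold d ∧ ∀ σ ∈ K.faces, σ.card + 1 ≤ d → (K.link σ).Connected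

/-- the geometric realization of `K`, inside `V → ℝ` -/
def realization (K : SComplex V) [Fintype V] : Set (V → ℝ) :=
  {f | ∃ σ ∈ K.faces, (∀ v, v ∉ σ → f v = 0) ∧ (∀ v, 0 ≤ f v) ∧ (∑ v, f v) = 1}

end SComplex

/-- the standard 2-sphere -/
noncomputable def Sphere2 : Set (EuclideanSpace ℝ (Fin 3)) := Metric.sphere 0 1

/-- the real projective plane, as the quotient of the 2-sphere by the antipodal map -/
def RealProjPlane : Type :=
  Quot fun a b : Sphere2 => (a : EuclideanSpace ℝ (Fin 3)) = -(b : EuclideanSpace ℝ (Fin 3))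

noncomputable instance : TopologicalSpace RealProjPlane := by unfold RealProjPlane; infer_instance

noncomputable def UnitSquare : Set (ℝ × ℝ) := Set.Icc 0 1 ×ˢ Set.Icc 0 1

/-- the Möbius band, as a quotient of the unit square -/
def MobiusBand : Type :=
  Quot fun a b : UnitSquare =>
    (a : ℝ × ℝ).1 = 0 ∧ (b : ℝ × ℝ).1 = 1 ∧ (b : ℝ × ℝ).2 = 1 - (a : ℝ × ℝ).2

noncomputable instance : TopologicalSpace MobiusBand := by unfold MobiusBand; infer_instance

noncomputable def ClosedDisc : Set (ℝ × ℝ) := Metric.closedBall 0 1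

namespace SComplex

variable {V : Type} [DecidableEq V] [Fintype V]

/-- the carrier of `K` is a 2-sphere -/
def IsSphere2 (K : SComplex V) : Prop := Nonempty (K.realization ≃ₜ Sphere2)

/-- the carrier of `K` is a real projective plane -/
def IsRP2 (K : SComplex V) : Prop := Nonempty (K.realization ≃ₜ RealProjPlane)

/-- `K` is a triangulated Möbius strip -/
def IsMobius (K : SComplex V) : Prop := Nonempty (K.realization ≃ₜ MobiusBand)

/-- `K` is a triangulated disc -/
def IsDisc (K : SComplex V) : Prop := Nonempty (K.realization ≃ₜ ClosedDisc)

end SComplex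

namespace SComplex

variable {V : Type} [DecidableEq V]

/-- `K` is the boundary complex of a `(d+1)`-simplex: all proper nonempty subsets
of a set of `d+2` vertices. -/
def IsBoundarySimplex (K : SComplex V) (d : ℕ) : Prop :=
  ∃ W : Finset V, W.card = d + 2 ∧ K.faces = (W.powerset.erase W).erase ∅

/-- `Δ'` is obtained from the `d`-dimensional complex `Δ` by a single facet
subdivision: remove a facet `σ`, add a new vertex `w`, and add all faces
`w ⋆ τ` for proper faces `τ` of `σ`. -/
def FacetSubdivision (Δ Δ' : SComplex V) (d : ℕ) : Prop :=
  ∃ σ ∈ Δ.faces, ∃ w : V, σ.card = d + 1 ∧ (∀ τ ∈ Δ.faces, w ∉ τ) ∧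
    Δ'.faces = (Δ.faces.erase σ) ∪ (σ.powerset.erase σ).image (insert w)

/-- a stacked `d`-sphere: obtained from the boundary complex of a `(d+1)`-simplex
by a finite sequence of facet subdivisions. -/
def IsStackedSphere (K : SComplex V) (d : ℕ) : Prop :=
  ∃ K₀ : SComplex V, K₀.IsBoundarySimplex d ∧
    Relation.ReflTransGen (fun A B => FacetSubdivision A B d) K₀ K

end SComplex

namespace SComplex

variable {V : Type} [DecidableEq V]

/-- an interior edge of a 2-complex: an edge contained in exactly two triangles -/
def InteriorEdge (M : SComplex V) (e : Finset V) : Prop :=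
  e ∈ M.faces ∧ e.card = 2 ∧ (M.faces.filter fun τ => τ.card = 3 ∧ e ⊆ τ).card = 2

/-- every vertex of `M` lies on the boundary, i.e. on an edge contained in exactly
one triangle -/
def NoInteriorVertices (M : SComplex V) : Prop :=
  ∀ v ∈ M.vertices, ∃ e ∈ M.faces, v ∈ e ∧ e.card = 2 ∧
    (M.faces.filter fun τ => τ.card = 3 ∧ e ⊆ τ).card = 1

/-- `M₁, M₂` are the two pieces obtained by cutting `M` along the separating
interior edge `e`: two subcomplexes meeting exactly along `e`, whose union is `M`,
each containing a triangle -/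
def SeparationAlong (M M₁ M₂ : SComplex V) (e : Finset V) : Prop :=
  M₁.faces ∪ M₂.faces = M.faces ∧
  M₁.faces ∩ M₂.faces = e.powerset.filter (· ≠ ∅) ∧
  (∃ τ ∈ M₁.faces, τ.card = 3) ∧ (∃ τ ∈ M₂.faces, τ.card = 3)

/-- the interior edge `e` separates `M` into two pieces -/
def Separates (M : SComplex V) (e : Finset V) : Prop :=
  ∃ M₁ M₂ : SComplex V, M.SeparationAlong M₁ M₂ e

end SComplex

open Finset

/-- every nonvanishing continuous function on `S` has a continuous logarithm -/
def HasLogs {X : Type*} [TopologicalSpace X] (S : Set X) : Prop :=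
  ∀ g : X → ℂ, ContinuousOn g S → (∀ x ∈ S, g x ≠ 0) →
    ∃ L : X → ℂ, ContinuousOn L S ∧ ∀ x ∈ S, Complex.exp (L x) = g x

theorem StarConvex.hasLogs {E : Type*} [AddCommGroup E] [Module ℝ E] [TopologicalSpace E]
    [ContinuousAdd E] [ContinuousSMul ℝ E] {S : Set E} {c : E} (hc : c ∈ S)
    (hS : StarConvex ℝ c S) : HasLogs S := by
  intro g hg hg0
  have key : ∀ (t : unitInterval) (x : S), (1 - (t : ℝ)) • c + (t : ℝ) • (x : E) ∈ S := fun t x =>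
    hS x.2 (by linarith [t.2.2]) t.2.1 (by ring)
  let H : C(unitInterval × S, {z : ℂ // z ≠ 0}) :=
    ⟨fun p => ⟨g ((1 - (p.1 : ℝ)) • c + (p.1 : ℝ) • (p.2 : E)), hg0 _ (key _ _)⟩, by
      refine Continuous.subtype_mk ?_ _
      refine hg.comp_continuous ?_ (fun p => key _ _)
      fun_prop⟩
  let f : C(S, ℂ) := ContinuousMap.const _ (Complex.log (g c))
  have H0 : ∀ a, H (0, a) = (fun z : ℂ ↦ (⟨_, z.exp_ne_zero⟩ : {z : ℂ // z ≠ 0})) (f a) := by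
    intro a
    apply Subtype.ext
    simp [H, f, Complex.exp_log (hg0 c hc)]
  let G := Complex.isCoveringMap_exp.liftHomotopy H f H0
  have hG := Complex.isCoveringMap_exp.liftHomotopy_lifts H f H0
  classical
  refine ⟨fun x => if hx : x ∈ S then G (1, ⟨x, hx⟩) else 0, ?_, ?_⟩
  · rw [continuousOn_iff_continuous_domRestrict]
    have : S.domRestrict (fun x => if hx : x ∈ S then G (1, ⟨x, hx⟩) else 0) = fun x => G (1, x) := by
      funext x
      simp [Set.domRestrict, x.2]
    rw [this]
    exact G.continuous.comp (by fun_prop)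
  · intro x hx
    have := congrArg Subtype.val (congrFun hG (1, ⟨x, hx⟩))
    simp only [hx, dif_pos]
    simpa [H, G] using this

theorem log_const {X : Type*} [TopologicalSpace X] {S : Set X} (hS : IsPreconnected S) {F : X → ℂ}
    (hF : ContinuousOn F S) (h1 : ∀ x ∈ S, Complex.exp (F x) = 1) :
    ∃ k : ℤ, ∀ x ∈ S, F x = k * (2 * Real.pi * Complex.I) := by
  rcases S.eq_empty_or_nonempty with rfl | ⟨x0, hx0⟩
  · exact ⟨0, by simp⟩
  obtain ⟨k, hk⟩ := Complex.exp_eq_one_iff.mp (h1 x0 hx0)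
  refine ⟨k, ?_⟩
  have hne : (2 * Real.pi * Complex.I : ℂ) ≠ 0 := Complex.two_pi_I_ne_zero
  have hc : ContinuousOn (fun x => (F x / (2 * Real.pi * Complex.I)).re) S :=
    Complex.continuous_re.comp_continuousOn (hF.div_const _)
  have hintg : ∀ x ∈ S, ∃ n : ℤ, F x = n * (2 * Real.pi * Complex.I) ∧
      (F x / (2 * Real.pi * Complex.I)).re = n := by
    intro x hx
    obtain ⟨n, hn⟩ := Complex.exp_eq_one_iff.mp (h1 x hx)
    refine ⟨n, hn, ?_⟩
    rw [hn, mul_div_assoc, div_self hne]; simp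
  intro x hx
  obtain ⟨n, hn, hn'⟩ := hintg x hx
  obtain ⟨m, hm, hm'⟩ := hintg x0 hx0
  have hnm : n = m := by
    by_contra hnm
    have hd : IsDiscrete (Set.range ((↑) : ℤ → ℝ)) := Int.isClosedEmbedding_coe_real.isDiscrete_range
    have := hS.constant_of_mapsTo hd hc (fun y hy => by
      obtain ⟨l, _, hl⟩ := hintg y hy
      exact ⟨l, hl.symm⟩) hx hx0
    rw [hn', hm'] at this
    exact hnm (by exact_mod_cast this)
  have : m = k := by
    have : (m : ℂ) = k := mul_right_cancel₀ hne (hm.symm.trans hk)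
    exact_mod_cast this
  rw [hn, hnm, this]

theorem glue_logs {X : Type*} [TopologicalSpace X] {A B : Set X} (hA : IsOpen A) (hB : IsOpen B)
    {f La Lb : X → ℂ} (hLa : ContinuousOn La A) (hLb : ContinuousOn Lb B)
    (ea : ∀ x ∈ A, Complex.exp (La x) = f x) (eb : ∀ x ∈ B, Complex.exp (Lb x) = f x)
    (k : ℤ) (hk : ∀ x ∈ A ∩ B, La x - Lb x = k * (2 * Real.pi * Complex.I)) :
    ∃ L : X → ℂ, ContinuousOn L (A ∪ B) ∧ ∀ x ∈ A ∪ B, Complex.exp (L x) = f x := by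
  classical
  let L : X → ℂ := fun x => if x ∈ A then La x else Lb x + k * (2 * Real.pi * Complex.I)
  have h1 : ∀ x ∈ A, L x = La x := fun x hx => by simp [L, hx]
  have h2 : ∀ x ∈ B, L x = Lb x + k * (2 * Real.pi * Complex.I) := fun x hx => by
    by_cases hxA : x ∈ A
    · rw [h1 x hxA, ← hk x ⟨hxA, hx⟩]; ring
    · simp [L, hxA]
  refine ⟨L, ?_, ?_⟩
  · refine ContinuousOn.union_of_isOpen (hLa.congr h1) ?_ hA hB
    exact (hLb.add continuousOn_const).congr h2
  · rintro x (hx | hx)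
    · rw [h1 x hx, ea x hx]
    · rw [h2 x hx, Complex.exp_add, Complex.exp_int_mul_two_pi_mul_I, mul_one, eb x hx]

theorem diff_log {X : Type*} [TopologicalSpace X] {A B C : Set X}
    {f La Lb : X → ℂ} (hLa : ContinuousOn La A) (hLb : ContinuousOn Lb B)
    (ea : ∀ x ∈ A, Complex.exp (La x) = f x) (eb : ∀ x ∈ B, Complex.exp (Lb x) = f x)
    (hC : IsPreconnected C) (hCAB : C ⊆ A ∩ B) :
    ∃ k : ℤ, ∀ x ∈ C, La x - Lb x = k * (2 * Real.pi * Complex.I) := by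
  refine log_const (F := fun x => La x - Lb x) hC ?_ ?_
  · exact (hLa.mono fun x hx => (hCAB hx).1).sub (hLb.mono fun x hx => (hCAB hx).2)
  · intro x hx
    rw [Complex.exp_sub, ea x (hCAB hx).1, eb x (hCAB hx).2, div_self]
    rw [← ea x (hCAB hx).1]; exact Complex.exp_ne_zero _

theorem HasLogs.union {X : Type*} [TopologicalSpace X] {A B : Set X} (hA : IsOpen A) (hB : IsOpen B)
    (lA : HasLogs A) (lB : HasLogs B) (hC : IsPreconnected (A ∩ B)) : HasLogs (A ∪ B) := by
  intro g hg hg0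
  obtain ⟨La, hLa, ea⟩ := lA g (hg.mono Set.subset_union_left) (fun x hx => hg0 x (Or.inl hx))
  obtain ⟨Lb, hLb, eb⟩ := lB g (hg.mono Set.subset_union_right) (fun x hx => hg0 x (Or.inr hx))
  obtain ⟨k, hk⟩ := diff_log hLa hLb ea eb hC subset_rfl
  exact glue_logs hA hB hLa hLb ea eb k hk

/-- the group of nonvanishing functions modulo exponentials has rank at most one -/
def RankOne {X : Type*} [TopologicalSpace X] (S : Set X) : Prop :=
  ∀ g h : X → ℂ, ContinuousOn g S → (∀ x ∈ S, g x ≠ 0) → ContinuousOn h S → (∀ x ∈ S, h x ≠ 0) →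
    ∃ m n : ℤ, (m ≠ 0 ∨ n ≠ 0) ∧
      ∃ L : X → ℂ, ContinuousOn L S ∧ ∀ x ∈ S, Complex.exp (L x) = g x ^ m * h x ^ n

theorem HasLogs.rankOne {X : Type*} [TopologicalSpace X] {S : Set X} (hS : HasLogs S) :
    RankOne S := by
  intro g h hg hg0 _ _
  obtain ⟨L, hL, e⟩ := hS g hg hg0
  exact ⟨1, 0, Or.inl one_ne_zero, L, hL, fun x hx => by simp [e x hx]⟩

theorem rankOne_union {X : Type*} [TopologicalSpace X] {A B C D : Set X} (hA : IsOpen A)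
    (hB : IsOpen B) (lA : HasLogs A) (lB : HasLogs B) (hC : IsPreconnected C)
    (hD : IsPreconnected D) (hCD : A ∩ B = C ∪ D) : RankOne (A ∪ B) := by
  intro g h hg hg0 hh hh0
  have hC' : C ⊆ A ∩ B := hCD ▸ Set.subset_union_left
  have hD' : D ⊆ A ∩ B := hCD ▸ Set.subset_union_right
  obtain ⟨La, hLa, ea⟩ := lA g (hg.mono Set.subset_union_left) (fun x hx => hg0 x (Or.inl hx))
  obtain ⟨Lb, hLb, eb⟩ := lB g (hg.mono Set.subset_union_right) (fun x hx => hg0 x (Or.inr hx))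
  obtain ⟨Ma, hMa, fa⟩ := lA h (hh.mono Set.subset_union_left) (fun x hx => hh0 x (Or.inl hx))
  obtain ⟨Mb, hMb, fb⟩ := lB h (hh.mono Set.subset_union_right) (fun x hx => hh0 x (Or.inr hx))
  obtain ⟨k1, hk1⟩ := diff_log hLa hLb ea eb hC hC'
  obtain ⟨k2, hk2⟩ := diff_log hLa hLb ea eb hD hD'
  obtain ⟨l1, hl1⟩ := diff_log hMa hMb fa fb hC hC'
  obtain ⟨l2, hl2⟩ := diff_log hMa hMb fa fb hD hD'
  obtain ⟨m, n, hmn, heq⟩ : ∃ m n : ℤ, (m ≠ 0 ∨ n ≠ 0) ∧ m * k1 + n * l1 = m * k2 + n * l2 := by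
    by_cases hk : k1 = k2
    · exact ⟨1, 0, Or.inl one_ne_zero, by simp [hk]⟩
    · exact ⟨l1 - l2, k2 - k1, Or.inr (sub_ne_zero.mpr (Ne.symm hk)), by ring⟩
  refine ⟨m, n, hmn, ?_⟩
  refine glue_logs (La := fun x => m * La x + n * Ma x) (Lb := fun x => m * Lb x + n * Mb x) hA hB
    ((continuousOn_const.mul hLa).add (continuousOn_const.mul hMa))
    ((continuousOn_const.mul hLb).add (continuousOn_const.mul hMb)) ?_ ?_ (m * k1 + n * l1) ?_
  · intro x hx
    rw [Complex.exp_add, Complex.exp_int_mul, Complex.exp_int_mul, ea x hx, fa x hx]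
  · intro x hx
    rw [Complex.exp_add, Complex.exp_int_mul, Complex.exp_int_mul, eb x hx, fb x hx]
  · intro x hx
    rw [hCD] at hx
    rcases hx with hx | hx
    · have e1 := hk1 x hx
      have e2 := hl1 x hx
      push_cast
      linear_combination (m : ℂ) * e1 + (n : ℂ) * e2
    · have e1 := hk2 x hx
      have e2 := hl2 x hx
      have e3 : ((m * k1 + n * l1 : ℤ) : ℂ) = ((m * k2 + n * l2 : ℤ) : ℂ) := by rw [heq]
      rw [e3]
      push_cast
      linear_combination (m : ℂ) * e1 + (n : ℂ) * e2

open Finset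
open scoped Topology

theorem HasLogs.transport {X Y : Type*} [TopologicalSpace X] [TopologicalSpace Y] {S : Set X}
    {T : Set Y} {e : X → Y} {e' : Y → X} (he : ContinuousOn e S) (hST : Set.MapsTo e S T)
    (he' : ContinuousOn e' T) (hTS : Set.MapsTo e' T S) (hee : ∀ y ∈ T, e (e' y) = y)
    (h : HasLogs S) : HasLogs T := by
  intro g hg hg0
  obtain ⟨L, hL, eL⟩ := h (g ∘ e) (hg.comp he hST) (fun x hx => hg0 _ (hST hx))
  refine ⟨L ∘ e', hL.comp he' hTS, fun y hy => ?_⟩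
  simp [eL _ (hTS hy), hee y hy]

theorem RankOne.transport {X Y : Type*} [TopologicalSpace X] [TopologicalSpace Y] {S : Set X}
    {T : Set Y} {e : X → Y} {e' : Y → X} (he : ContinuousOn e S) (hST : Set.MapsTo e S T)
    (he' : ContinuousOn e' T) (hTS : Set.MapsTo e' T S) (hee : ∀ y ∈ T, e (e' y) = y)
    (h : RankOne S) : RankOne T := by
  intro g k hg hg0 hk hk0
  obtain ⟨m, n, hmn, L, hL, eL⟩ := h (g ∘ e) (k ∘ e) (hg.comp he hST) (fun x hx => hg0 _ (hST hx))
    (hk.comp he hST) (fun x hx => hk0 _ (hST hx))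
  refine ⟨m, n, hmn, L ∘ e', hL.comp he' hTS, fun y hy => ?_⟩
  simp [eL _ (hTS hy), hee y hy]

/-- arbitrarily small punctured neighbourhoods of `p` in `S` are connected of rank at most one -/
def LocGood {X : Type*} [TopologicalSpace X] (S : Set X) (p : X) : Prop :=
  ∀ U ∈ 𝓝[S] p, ∃ W ∈ 𝓝[S] p, W ⊆ U ∧ W ⊆ S ∧ IsPreconnected (W \ {p}) ∧ RankOne (W \ {p})

/-- arbitrarily small punctured neighbourhoods of `p` in `S` have logarithms -/
def LocTriv {X : Type*} [TopologicalSpace X] (S : Set X) (p : X) : Prop :=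
  ∀ U ∈ 𝓝[S] p, ∃ W ∈ 𝓝[S] p, W ⊆ U ∧ W ⊆ S ∧ HasLogs (W \ {p})

theorem loc_transport_aux {X Y : Type*} [TopologicalSpace X] [TopologicalSpace Y]
    (e : PartialEquiv X Y)
    (he : ContinuousOn e e.source) (he' : ContinuousOn e.symm e.target) {p : X} (hp : p ∈ e.source)
    {U : Set Y} (hU : U ∈ 𝓝[e.target] (e p)) (P : Set Y → Prop)
    (H : ∀ U' ∈ 𝓝[e.source] p, ∃ W ∈ 𝓝[e.source] p, W ⊆ U' ∧ W ⊆ e.source ∧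
      (∀ T : Set Y, ContinuousOn e (W \ {p}) → ContinuousOn e.symm T → Set.MapsTo e (W \ {p}) T →
        Set.MapsTo e.symm T (W \ {p}) → (∀ y ∈ T, e (e.symm y) = y) → T = e '' (W \ {p}) → P T)) :
    ∃ W ∈ 𝓝[e.target] (e p), W ⊆ U ∧ W ⊆ e.target ∧ P (W \ {e p}) := by
  have h1 : e.source ∩ e ⁻¹' U ∈ 𝓝[e.source] p := by
    refine Filter.inter_mem self_mem_nhdsWithin ?_
    have := (he p hp).tendsto_nhdsWithin (t := e.target) e.mapsTo
    exact this hU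
  obtain ⟨W, hW, hWU, hWs, hP⟩ := H _ h1
  refine ⟨e.target ∩ e.symm ⁻¹' W, ?_, ?_, Set.inter_subset_left, ?_⟩
  · refine Filter.inter_mem self_mem_nhdsWithin ?_
    have := (he' (e p) (e.mapsTo hp)).tendsto_nhdsWithin (t := e.source) e.mapsTo_symm
    rw [e.left_inv hp] at this
    exact this hW
  · rintro y ⟨hy, hyW⟩
    have := (hWU hyW).2
    simpa [e.right_inv hy] using this
  · refine hP _ (he.mono fun x hx => hWs hx.1) (he'.mono fun y hy => hy.1.1) ?_ ?_ ?_ ?_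
    · rintro x ⟨hx, hxp⟩
      refine ⟨⟨e.mapsTo (hWs hx), by simpa [e.left_inv (hWs hx)] using hx⟩, fun h => hxp ?_⟩
      exact e.injOn (hWs hx) hp h
    · rintro y ⟨⟨hy, hyW⟩, hyp⟩
      refine ⟨hyW, fun h => hyp ?_⟩
      have h' : e.symm y = p := h
      rw [← h', e.right_inv hy]; rfl
    · rintro y ⟨⟨hy, hyW⟩, hyp⟩
      exact e.right_inv hy
    · ext y
      constructor
      · rintro ⟨⟨hy, hyW⟩, hyp⟩
        refine ⟨e.symm y, ⟨hyW, fun h => hyp ?_⟩, e.right_inv hy⟩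
        have h' : e.symm y = p := h
        rw [← h', e.right_inv hy]; rfl
      · rintro ⟨x, ⟨hx, hxp⟩, rfl⟩
        refine ⟨⟨e.mapsTo (hWs hx), by simpa [e.left_inv (hWs hx)] using hx⟩, fun h => hxp ?_⟩
        exact e.injOn (hWs hx) hp h

theorem LocGood.transport {X Y : Type*} [TopologicalSpace X] [TopologicalSpace Y]
    (e : PartialEquiv X Y)
    (he : ContinuousOn e e.source) (he' : ContinuousOn e.symm e.target) {p : X} (hp : p ∈ e.source)
    (h : LocGood e.source p) : LocGood e.target (e p) := by
  intro U hU
  refine loc_transport_aux e he he' hp hU (fun T => IsPreconnected T ∧ RankOne T) ?_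
  intro U' hU'
  obtain ⟨W, hW, h1, h2, h3, h4⟩ := h U' hU'
  refine ⟨W, hW, h1, h2, fun T c1 c2 m1 m2 hr hT => ⟨?_, h4.transport c1 m1 c2 m2 hr⟩⟩
  rw [hT]
  exact h3.image _ c1

theorem LocTriv.transport {X Y : Type*} [TopologicalSpace X] [TopologicalSpace Y]
    (e : PartialEquiv X Y)
    (he : ContinuousOn e e.source) (he' : ContinuousOn e.symm e.target) {p : X} (hp : p ∈ e.source)
    (h : LocTriv e.source p) : LocTriv e.target (e p) := by
  intro U hU
  refine loc_transport_aux e he he' hp hU (fun T => HasLogs T) ?_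
  intro U' hU'
  obtain ⟨W, hW, h1, h2, h3⟩ := h U' hU'
  exact ⟨W, hW, h1, h2, fun T c1 c2 m1 m2 hr hT => h3.transport c1 m1 c2 m2 hr⟩

theorem LocGood.of_nhds {X : Type*} [TopologicalSpace X] {S T : Set X} {p : X} (h : LocGood S p)
    (hST : 𝓝[S] p = 𝓝[T] p) : LocGood T p := by
  intro U hU
  rw [← hST] at hU
  have hT : T ∈ 𝓝[S] p := hST ▸ self_mem_nhdsWithin
  obtain ⟨W, hW, h1, _, h3⟩ := h (U ∩ T) (Filter.inter_mem hU hT)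
  exact ⟨W, hST ▸ hW, fun x hx => (h1 hx).1, fun x hx => (h1 hx).2, h3⟩

theorem LocTriv.of_nhds {X : Type*} [TopologicalSpace X] {S T : Set X} {p : X} (h : LocTriv S p)
    (hST : 𝓝[S] p = 𝓝[T] p) : LocTriv T p := by
  intro U hU
  rw [← hST] at hU
  have hT : T ∈ 𝓝[S] p := hST ▸ self_mem_nhdsWithin
  obtain ⟨W, hW, h1, _, h3⟩ := h (U ∩ T) (Filter.inter_mem hU hT)
  exact ⟨W, hST ▸ hW, fun x hx => (h1 hx).1, fun x hx => (h1 hx).2, h3⟩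

section punctured
variable {F : Type*} [NormedAddCommGroup F] [NormedSpace ℝ F]

def slitPos (F : Type*) [NormedAddCommGroup F] : Set (ℝ × F) := {p | p.2 = 0 → 0 < p.1}
def slitNeg (F : Type*) [NormedAddCommGroup F] : Set (ℝ × F) := {p | p.2 = 0 → p.1 < 0}

theorem isOpen_slitPos : IsOpen (slitPos F) := by
  have : slitPos F = {p | p.2 = 0}ᶜ ∪ {p | 0 < p.1} := by
    ext p; simp [slitPos, imp_iff_not_or]
  rw [this]
  exact (isClosed_eq continuous_snd continuous_const).isOpen_compl.union
    (isOpen_lt continuous_const continuous_fst)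

theorem isOpen_slitNeg : IsOpen (slitNeg F) := by
  have : slitNeg F = {p | p.2 = 0}ᶜ ∪ {p | p.1 < 0} := by
    ext p; simp [slitNeg, imp_iff_not_or]
  rw [this]
  exact (isClosed_eq continuous_snd continuous_const).isOpen_compl.union
    (isOpen_lt continuous_fst continuous_const)

theorem hasLogs_slitPos : HasLogs (slitPos F) := by
  refine StarConvex.hasLogs (c := ((1 : ℝ), (0 : F))) (by simp [slitPos]) ?_
  rintro ⟨x, y⟩ hxy a b ha hb hab
  simp only [slitPos, Set.mem_ofPred_eq] at hxy ⊢
  intro h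
  simp at h ⊢
  rcases h with h | h
  · subst h; linarith
  · have := hxy h
    rcases hb.eq_or_lt with hb | hb
    · subst hb; linarith
    · have := mul_pos hb this; linarith

theorem hasLogs_slitNeg : HasLogs (slitNeg F) := by
  refine StarConvex.hasLogs (c := ((-1 : ℝ), (0 : F))) (by simp [slitNeg]) ?_
  rintro ⟨x, y⟩ hxy a b ha hb hab
  simp only [slitNeg, Set.mem_ofPred_eq] at hxy ⊢
  intro h
  simp at h ⊢
  rcases h with h | h
  · subst h; linarith
  · have := hxy h
    rcases hb.eq_or_lt with hb | hb
    · subst hb; linarith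
    · have := mul_neg_of_pos_of_neg hb this; linarith

theorem slit_union : slitPos F ∪ slitNeg F = {0}ᶜ := by
  ext ⟨x, y⟩
  simp only [slitPos, slitNeg, Set.mem_union, Set.mem_ofPred_eq, Set.mem_compl_iff,
    Set.mem_singleton_iff, Prod.mk_eq_zero]
  by_cases hy : y = 0
  · simp [hy, lt_or_lt_iff_ne, eq_comm]
  · simp [hy]

theorem slit_inter : slitPos F ∩ slitNeg F = Set.univ ×ˢ {0}ᶜ := by
  ext ⟨x, y⟩
  simp only [slitPos, slitNeg, Set.mem_inter_iff, Set.mem_ofPred_eq, Set.mem_prod, Set.mem_univ,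
    true_and, Set.mem_compl_iff, Set.mem_singleton_iff]
  by_cases hy : y = 0
  · simp only [hy, forall_const, not_true, iff_false]
    rintro ⟨h1, h2⟩; linarith
  · simp [hy]

theorem hasLogs_punctured (hF : 1 < Module.rank ℝ F) : HasLogs ({0}ᶜ : Set (ℝ × F)) := by
  rw [← slit_union]
  refine HasLogs.union isOpen_slitPos isOpen_slitNeg hasLogs_slitPos hasLogs_slitNeg ?_
  rw [slit_inter]
  exact isPreconnected_univ.prod (isConnected_compl_singleton_of_one_lt_rank hF 0).isPreconnected

theorem rankOne_punctured : RankOne ({0}ᶜ : Set (ℝ × ℝ)) := by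
  rw [← slit_union]
  refine rankOne_union (C := Set.univ ×ˢ Set.Iio 0) (D := Set.univ ×ˢ Set.Ioi 0)
    isOpen_slitPos isOpen_slitNeg hasLogs_slitPos hasLogs_slitNeg
    (isPreconnected_univ.prod isPreconnected_Iio) (isPreconnected_univ.prod isPreconnected_Ioi) ?_
  rw [slit_inter, ← Set.prod_union, Set.Iio_union_Ioi]

theorem preconn_punctured : IsPreconnected ({0}ᶜ : Set (ℝ × ℝ)) :=
  (isConnected_compl_singleton_of_one_lt_rank (by
    rw [rank_prod', Module.rank_self, one_add_one_eq_two]; exact Cardinal.one_lt_two) 0).isPreconnected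

/-- transport data from the punctured space to the punctured ball -/
theorem ball_data {E : Type*} [NormedAddCommGroup E] [NormedSpace ℝ E] (p : E) {r : ℝ}
    (hr : 0 < r) : ∃ e e' : E → E, ContinuousOn e {0}ᶜ ∧ Set.MapsTo e {0}ᶜ (Metric.ball p r \ {p}) ∧
      ContinuousOn e' (Metric.ball p r \ {p}) ∧ Set.MapsTo e' (Metric.ball p r \ {p}) {0}ᶜ ∧
      (∀ y ∈ Metric.ball p r \ {p}, e (e' y) = y) := by
  let b := OpenPartialHomeomorph.univBall p r
  have hs : b.source = Set.univ := OpenPartialHomeomorph.univBall_source p r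
  have ht : b.target = Metric.ball p r := OpenPartialHomeomorph.univBall_target p hr
  have h0 : b 0 = p := OpenPartialHomeomorph.univBall_apply_zero p r
  have h0' : b.symm p = 0 := OpenPartialHomeomorph.univBall_symm_apply_center p r
  refine ⟨b, b.symm, ?_, ?_, ?_, ?_, ?_⟩
  · exact b.continuousOn.mono (by simp [hs])
  · intro x hx
    refine ⟨ht ▸ b.mapsTo (by simp [hs]), fun h => hx ?_⟩
    exact b.injOn (by simp [hs]) (by simp [hs]) (h.trans h0.symm)
  · exact b.symm.continuousOn.mono (by intro x hx; simpa [ht] using hx.1)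
  · rintro y ⟨hy, hyp⟩ h
    have hy' : y ∈ b.target := ht ▸ hy
    have h' : b.symm y = 0 := h
    apply hyp
    have := b.right_inv hy'
    rw [h', h0] at this
    exact this.symm
  · rintro y ⟨hy, hyp⟩
    exact b.right_inv (ht ▸ hy)

theorem locTriv_prod (hF : 1 < Module.rank ℝ F) (p : ℝ × F) : LocTriv Set.univ p := by
  intro U hU
  rw [nhdsWithin_univ] at hU ⊢
  obtain ⟨r, hr, hU⟩ := Metric.mem_nhds_iff.mp hU
  refine ⟨Metric.ball p r, Metric.ball_mem_nhds p hr, hU, Set.subset_univ _, ?_⟩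
  obtain ⟨e, e', h1, h2, h3, h4, h5⟩ := ball_data p hr
  exact (hasLogs_punctured hF).transport h1 h2 h3 h4 h5

theorem locGood_plane (p : ℝ × ℝ) : LocGood Set.univ p := by
  intro U hU
  rw [nhdsWithin_univ] at hU ⊢
  obtain ⟨r, hr, hU⟩ := Metric.mem_nhds_iff.mp hU
  refine ⟨Metric.ball p r, Metric.ball_mem_nhds p hr, hU, Set.subset_univ _, ?_, ?_⟩
  · obtain ⟨e, e', h1, h2, h3, h4, h5⟩ := ball_data p hr
    have : Metric.ball p r \ {p} = e '' {0}ᶜ := by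
      ext y
      constructor
      · intro hy; exact ⟨e' y, h4 hy, h5 y hy⟩
      · rintro ⟨x, hx, rfl⟩; exact h2 hx
    rw [this]
    exact preconn_punctured.image _ h1
  · obtain ⟨e, e', h1, h2, h3, h4, h5⟩ := ball_data p hr
    exact rankOne_punctured.transport h1 h2 h3 h4 h5

end punctured

/-- the open strip -/
def strip : Set (ℝ × ℝ) := Set.Ioo 0 1 ×ˢ Set.Icc 0 1

theorem convex_strip : Convex ℝ strip := (convex_Ioo 0 1).prod (convex_Icc 0 1)

theorem strip_nhds {p : ℝ × ℝ} (hp : p ∈ strip) (h2 : p.2 ∈ Set.Ioo (0 : ℝ) 1) : 𝓝[strip] p = 𝓝 p := by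
  apply nhdsWithin_eq_nhds.mpr
  have : Set.Ioo (0 : ℝ) 1 ×ˢ Set.Ioo (0 : ℝ) 1 ∈ 𝓝 p :=
    (isOpen_Ioo.prod isOpen_Ioo).mem_nhds ⟨hp.1, h2⟩
  exact Filter.mem_of_superset this (Set.prod_mono subset_rfl Set.Ioo_subset_Icc_self)

theorem locGood_strip {p : ℝ × ℝ} (hp : p ∈ strip) : LocGood strip p := by
  by_cases h2 : p.2 ∈ Set.Ioo (0 : ℝ) 1
  · exact (locGood_plane p).of_nhds (by rw [nhdsWithin_univ, strip_nhds hp h2])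
  · intro U hU
    obtain ⟨r, hr, hU⟩ := Metric.mem_nhdsWithin_iff.mp hU
    have hW : Convex ℝ (Metric.ball p r ∩ strip) := (convex_ball p r).inter convex_strip
    obtain ⟨hp1, hp2⟩ := hp
    obtain ⟨d, hd0, hd1⟩ : ∃ d, 0 < d ∧ d < min r 1 := exists_between (lt_min hr one_pos)
    have hdr : d < r := hd1.trans_le (min_le_left _ _)
    have hd1' : d < 1 := hd1.trans_le (min_le_right _ _)
    obtain ⟨c, hc, hcne, hcs⟩ : ∃ c ∈ Metric.ball p r ∩ strip, c.2 ≠ p.2 ∧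
        ∀ z ∈ strip, 0 ≤ (c.2 - p.2) * (z.2 - p.2) := by
      have : p.2 = 0 ∨ p.2 = 1 := by
        rcases hp2.1.eq_or_lt with h | h
        · exact Or.inl h.symm
        · rcases hp2.2.eq_or_lt with h' | h'
          · exact Or.inr h'
          · exact absurd ⟨h, h'⟩ h2
      rcases this with h | h
      · refine ⟨(p.1, d), ⟨?_, hp1, ?_⟩, ?_, ?_⟩
        · rw [Metric.mem_ball, Prod.dist_eq]
          simp [h, abs_of_pos hd0, hdr, hr]
        · exact ⟨hd0.le, hd1'.le⟩
        · simpa [h] using hd0.ne'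
        · rintro z ⟨_, hz⟩
          simp [h]; exact mul_nonneg hd0.le hz.1
      · refine ⟨(p.1, 1 - d), ⟨?_, hp1, ?_⟩, ?_, ?_⟩
        · rw [Metric.mem_ball, Prod.dist_eq]
          simp [h, Real.dist_eq, abs_of_pos hd0, hdr, hr]
        · exact ⟨by simp; linarith, by simp; linarith⟩
        · simpa [h] using hd0.ne'
        · rintro z ⟨_, hz⟩
          simp [h]; nlinarith [hz.2]
    have hst : StarConvex ℝ c ((Metric.ball p r ∩ strip) \ {p}) := by
      rintro z ⟨hz, hzp⟩ a b ha hb hab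
      refine ⟨hW hc hz ha hb hab, fun h => hzp ?_⟩
      have h' : a • c + b • z = p := h
      have e2 : a * c.2 + b * z.2 = p.2 := by rw [← h']; simp
      have hzs := hcs z hz.2
      have e3 : a * (c.2 - p.2) ^ 2 + b * ((c.2 - p.2) * (z.2 - p.2)) = 0 := by
        have : a * (c.2 - p.2) + b * (z.2 - p.2) = 0 := by
          linear_combination e2 - p.2 * hab
        linear_combination (c.2 - p.2) * this
      have hsq : 0 < (c.2 - p.2) ^ 2 := by
        have := sub_ne_zero.mpr hcne
        positivity
      have ha0 : a = 0 := by
        by_contra hne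
        have : 0 < a := lt_of_le_of_ne ha (Ne.symm hne)
        nlinarith [mul_pos this hsq, mul_nonneg hb hzs]
      have hb1 : b = 1 := by linarith
      rw [ha0, hb1] at h'
      simpa using h'
    have hcm : c ∈ (Metric.ball p r ∩ strip) \ {p} := ⟨hc, fun h => hcne (by rw [h])⟩
    refine ⟨Metric.ball p r ∩ strip, ?_, hU, Set.inter_subset_right, ?_, ?_⟩
    · exact Filter.inter_mem (mem_nhdsWithin_of_mem_nhds (Metric.ball_mem_nhds p hr))
        self_mem_nhdsWithin
    · exact (hst.isPathConnected hcm).isConnected.isPreconnected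
    · exact (StarConvex.hasLogs hcm hst).rankOne

theorem not_locTriv_plane (p : ℝ × ℝ) : ¬ LocTriv Set.univ p := by
  intro h
  obtain ⟨W, hW, -, -, hl⟩ := h Set.univ Filter.univ_mem
  rw [nhdsWithin_univ] at hW
  obtain ⟨r, hr, hrW⟩ := Metric.mem_nhds_iff.mp hW
  obtain ⟨L, hL, eL⟩ := hl (fun z => ((z.1 - p.1 : ℝ) : ℂ) + ((z.2 - p.2 : ℝ) : ℂ) * Complex.I)
    (by fun_prop) (by
      rintro z ⟨-, hz⟩ h0
      apply hz
      have h1 := congrArg Complex.re h0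
      have h2 := congrArg Complex.im h0
      simp at h1 h2
      exact Prod.ext (by linarith) (by linarith))
  let s := r / 2
  have hs : 0 < s := by simp [s, hr]
  let γ : ℝ → ℝ × ℝ := fun θ => (p.1 + s * Real.cos θ, p.2 + s * Real.sin θ)
  have hγ : Continuous γ := by fun_prop
  have hγW : ∀ θ, γ θ ∈ W \ {p} := by
    intro θ
    refine ⟨hrW ?_, ?_⟩
    · rw [Metric.mem_ball, Prod.dist_eq]
      have h1 : |s * Real.cos θ| < r := by
        rw [abs_mul, abs_of_pos hs]
        have := Real.abs_cos_le_one θ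
        simp only [s] at *; nlinarith
      have h2 : |s * Real.sin θ| < r := by
        rw [abs_mul, abs_of_pos hs]
        have := Real.abs_sin_le_one θ
        simp only [s] at *; nlinarith
      simpa only [γ, dist_self_add_left, Real.norm_eq_abs, max_lt_iff] using And.intro h1 h2
    · intro h0
      have h1 := congrArg Prod.fst h0
      have h2 := congrArg Prod.snd h0
      simp [γ, hs.ne'] at h1 h2
      have := Real.sin_sq_add_cos_sq θ
      rw [h1, h2] at this; norm_num at this
  obtain ⟨k, hk⟩ := log_const (S := Set.univ) (F := fun θ : ℝ => L (γ θ) - (Real.log s + θ * Complex.I))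
    isPreconnected_univ (by
      refine Continuous.continuousOn ?_
      exact (hL.comp_continuous hγ hγW).sub (by fun_prop)) (by
      intro θ _
      rw [Complex.exp_sub, eL _ (hγW θ), Complex.exp_add, ← Complex.ofReal_exp, Real.exp_log hs,
        Complex.exp_mul_I]
      simp only [γ, add_sub_cancel_left]
      push_cast
      have hne : (s : ℂ) * (Complex.cos θ + Complex.sin θ * Complex.I) ≠ 0 := by
        rw [← Complex.exp_mul_I]
        exact mul_ne_zero (by exact_mod_cast hs.ne') (Complex.exp_ne_zero _)
      rw [div_eq_one_iff_eq hne]; ring)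
  have h0 := hk 0 trivial
  have h1 := hk (2 * Real.pi) trivial
  have hγ2 : γ (2 * Real.pi) = γ 0 := by simp [γ]
  simp only [hγ2] at h1
  have h3 : (2 * Real.pi * Complex.I : ℂ) = 0 := by
    push_cast at h0 h1
    linear_combination h0 - h1
  exact Complex.two_pi_I_ne_zero h3

open Finset
open scoped Topology

namespace Mob

def mk (z : UnitSquare) : MobiusBand := Quot.mk _ z

theorem isQuotientMap_mk : Topology.IsQuotientMap mk := isQuotientMap_quot_mk

theorem continuous_mk : Continuous mk := isQuotientMap_mk.continuous

noncomputable def clamp (z : ℝ × ℝ) : UnitSquare :=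
  ⟨((Set.projIcc 0 1 zero_le_one z.1 : ℝ), (Set.projIcc 0 1 zero_le_one z.2 : ℝ)),
    ⟨(Set.projIcc 0 1 zero_le_one z.1).2, (Set.projIcc 0 1 zero_le_one z.2).2⟩⟩

theorem continuous_clamp : Continuous clamp := by
  refine Continuous.subtype_mk ?_ _
  exact (continuous_subtype_val.comp (continuous_projIcc.comp continuous_fst)).prodMk
    (continuous_subtype_val.comp (continuous_projIcc.comp continuous_snd))

theorem clamp_of_mem {z : ℝ × ℝ} (hz : z ∈ UnitSquare) : clamp z = ⟨z, hz⟩ := by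
  apply Subtype.ext
  apply Prod.ext
  · simp [clamp, Set.projIcc_of_mem zero_le_one hz.1]
  · simp [clamp, Set.projIcc_of_mem zero_le_one hz.2]

noncomputable def psi (z : ℝ × ℝ) : MobiusBand := mk (clamp z)

theorem continuous_psi : Continuous psi := continuous_mk.comp continuous_clamp

theorem psi_of_mem {z : ℝ × ℝ} (hz : z ∈ UnitSquare) : psi z = mk ⟨z, hz⟩ := by
  rw [psi, clamp_of_mem hz]

theorem psi_surj (q : MobiusBand) : ∃ z ∈ UnitSquare, psi z = q := by
  obtain ⟨z, rfl⟩ := isQuotientMap_mk.surjective q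
  exact ⟨z, z.2, psi_of_mem z.2⟩

theorem psi_glue {y : ℝ} (hy : y ∈ Set.Icc (0 : ℝ) 1) : psi (0, y) = psi (1, 1 - y) := by
  have h0 : ((0 : ℝ), y) ∈ UnitSquare := ⟨by simp, hy⟩
  have h1 : ((1 : ℝ), 1 - y) ∈ UnitSquare := ⟨by simp, ⟨by simpa using hy.2, by simpa using hy.1⟩⟩
  rw [psi_of_mem h0, psi_of_mem h1]
  exact Quot.sound ⟨rfl, rfl, rfl⟩

theorem mk_inj {a b : UnitSquare} (ha : (a : ℝ × ℝ).1 ∈ Set.Ioo (0 : ℝ) 1) (h : mk a = mk b) :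
    a = b := by
  let f : MobiusBand → Prop := Quot.lift (fun z : UnitSquare => z = a) (by
    rintro u v ⟨hu, hv, -⟩
    apply propext
    constructor
    · rintro rfl; rw [hu] at ha; exact absurd ha.1 (lt_irrefl _)
    · rintro rfl; rw [hv] at ha; exact absurd ha.2 (lt_irrefl _))
  have h1 : f (mk a) := rfl
  rw [h] at h1
  exact (show b = a from h1).symm

theorem strip_sub : strip ⊆ UnitSquare := Set.prod_mono Set.Ioo_subset_Icc_self subset_rfl

theorem half_mem {x y : ℝ} (hx : x ∈ Set.Icc (0:ℝ) 1) (hy : y ∈ Set.Icc (0:ℝ) 1) :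
    (x, y) ∈ UnitSquare := ⟨hx, hy⟩

/-- the image of the open strip -/
def A : Set MobiusBand := psi '' strip

theorem mk_mem_A {z : UnitSquare} : mk z ∈ A ↔ (z : ℝ × ℝ).1 ∈ Set.Ioo (0 : ℝ) 1 := by
  constructor
  · rintro ⟨p, hp, h⟩
    rw [psi_of_mem (strip_sub hp)] at h
    have := mk_inj (a := ⟨p, strip_sub hp⟩) hp.1 h
    rw [← this]; exact hp.1
  · intro h
    exact ⟨z, ⟨h, z.2.2⟩, psi_of_mem z.2⟩

theorem isOpen_A : IsOpen A := by
  rw [← isQuotientMap_mk.isOpen_preimage]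
  have : mk ⁻¹' A = {z : UnitSquare | (z : ℝ × ℝ).1 ∈ Set.Ioo (0 : ℝ) 1} := by
    ext z; exact mk_mem_A
  rw [this]
  exact isOpen_Ioo.preimage (continuous_fst.comp continuous_subtype_val)

noncomputable def kappa (q : MobiusBand) : ℝ × ℝ := ((isQuotientMap_mk.surjective q).choose : UnitSquare)

theorem kappa_mk {z : UnitSquare} (hz : (z : ℝ × ℝ).1 ∈ Set.Ioo (0 : ℝ) 1) : kappa (mk z) = z := by
  have h := (isQuotientMap_mk.surjective (mk z)).choose_spec
  have := mk_inj hz h.symm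
  rw [kappa, ← this]

theorem continuousOn_kappa : ContinuousOn kappa A := by
  rw [continuousOn_open_iff isOpen_A]
  intro O hO
  rw [← isQuotientMap_mk.isOpen_preimage]
  have : mk ⁻¹' (A ∩ kappa ⁻¹' O) =
      {z : UnitSquare | (z : ℝ × ℝ).1 ∈ Set.Ioo (0 : ℝ) 1} ∩ Subtype.val ⁻¹' O := by
    ext z
    constructor
    · rintro ⟨h1, h2⟩
      have h1' := mk_mem_A.mp h1
      refine ⟨h1', ?_⟩
      have h2' : kappa (mk z) ∈ O := h2
      rwa [kappa_mk h1'] at h2'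
    · rintro ⟨h1, h2⟩
      refine ⟨mk_mem_A.mpr h1, ?_⟩
      show kappa (mk z) ∈ O
      rw [kappa_mk h1]; exact h2
  rw [this]
  exact (isOpen_Ioo.preimage (continuous_fst.comp continuous_subtype_val)).inter
    (hO.preimage continuous_subtype_val)

noncomputable def chart : PartialEquiv (ℝ × ℝ) MobiusBand where
  toFun := psi
  invFun := kappa
  source := strip
  target := A
  map_source' z hz := ⟨z, hz, rfl⟩
  map_target' := by
    rintro _ ⟨z, hz, rfl⟩
    rw [psi_of_mem (strip_sub hz), kappa_mk (z := ⟨z, strip_sub hz⟩) hz.1]; exact hz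
  left_inv' := by
    intro z hz
    rw [psi_of_mem (strip_sub hz), kappa_mk (z := ⟨z, strip_sub hz⟩) hz.1]
  right_inv' := by
    rintro _ ⟨z, hz, rfl⟩
    rw [psi_of_mem (strip_sub hz), kappa_mk (z := ⟨z, strip_sub hz⟩) hz.1,
      psi_of_mem (strip_sub hz)]

theorem nhds_A {q : MobiusBand} (hq : q ∈ A) : 𝓝[A] q = 𝓝[Set.univ] q := by
  rw [nhdsWithin_univ]
  exact isOpen_A.nhdsWithin_eq hq

theorem locGood_A {q : MobiusBand} (hq : q ∈ A) : LocGood Set.univ q := by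
  obtain ⟨z, hz, rfl⟩ := hq
  have : LocGood A (psi z) := LocGood.transport chart continuous_psi.continuousOn continuousOn_kappa
    hz (locGood_strip hz)
  exact this.of_nhds (nhds_A ⟨z, hz, rfl⟩)

theorem hasLogs_A : HasLogs A := by
  have h : HasLogs strip := by
    have hc : ((1 / 2 : ℝ), (1 / 2 : ℝ)) ∈ strip := by
      constructor <;> constructor <;> norm_num
    exact StarConvex.hasLogs hc (convex_strip.starConvex hc)
  exact h.transport (e := psi) (e' := kappa) continuous_psi.continuousOn chart.mapsTo
    continuousOn_kappa chart.mapsTo_symm (fun y hy => chart.right_inv hy)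

/-- rotation of the square by a half turn, with values in the band -/
noncomputable def rot0 (z : UnitSquare) : MobiusBand :=
  if (z : ℝ × ℝ).1 ≤ 1 / 2 then psi ((z : ℝ × ℝ).1 + 1 / 2, (z : ℝ × ℝ).2)
  else psi ((z : ℝ × ℝ).1 - 1 / 2, 1 - (z : ℝ × ℝ).2)

theorem one_sub_mem {y : ℝ} (hy : y ∈ Set.Icc (0 : ℝ) 1) : 1 - y ∈ Set.Icc (0 : ℝ) 1 :=
  ⟨by linarith [hy.2], by linarith [hy.1]⟩

theorem continuous_rot0 : Continuous rot0 := by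
  refine Continuous.if_le ?_ ?_ (by fun_prop) (by fun_prop) ?_
  · exact continuous_psi.comp (by fun_prop)
  · exact continuous_psi.comp (by fun_prop)
  · intro z hz
    rw [hz]
    have := psi_glue (one_sub_mem z.2.2)
    norm_num at this ⊢
    exact this.symm

noncomputable def rot : MobiusBand → MobiusBand := Quot.lift rot0 (by
  rintro a b ⟨h0, h1, h2⟩
  simp only [rot0, h0, h1, h2]
  norm_num)

theorem continuous_rot : Continuous rot := by
  apply isQuotientMap_mk.continuous_iff.mpr
  exact continuous_rot0

theorem rot_psi_le {x y : ℝ} (hx : x ∈ Set.Icc (0:ℝ) 1) (hy : y ∈ Set.Icc (0:ℝ) 1) (h : x ≤ 1 / 2) :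
    rot (psi (x, y)) = psi (x + 1 / 2, y) := by
  rw [psi_of_mem (half_mem hx hy)]
  show rot0 _ = _
  simp only [rot0]
  rw [if_pos h]

theorem rot_psi_ge {x y : ℝ} (hx : x ∈ Set.Icc (0:ℝ) 1) (hy : y ∈ Set.Icc (0:ℝ) 1) (h : 1 / 2 ≤ x) :
    rot (psi (x, y)) = psi (x - 1 / 2, 1 - y) := by
  rcases h.eq_or_lt with h | h
  · rw [rot_psi_le hx hy h.symm.le, ← h]
    have := psi_glue (one_sub_mem hy)
    norm_num at this ⊢
    exact this.symm
  · rw [psi_of_mem (half_mem hx hy)]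
    show rot0 _ = _
    simp only [rot0]
    rw [if_neg (not_le.mpr h)]

theorem rot_rot {x y : ℝ} (hx : x ∈ Set.Icc (0:ℝ) 1) (hy : y ∈ Set.Icc (0:ℝ) 1) :
    rot (rot (psi (x, y))) = psi (x, 1 - y) := by
  rcases le_total x (1 / 2) with h | h
  · rw [rot_psi_le hx hy h, rot_psi_ge ⟨by linarith [hx.1], by linarith⟩ hy (by linarith [hx.1])]
    congr 2; ring
  · rw [rot_psi_ge hx hy h,
      rot_psi_le ⟨by linarith, by linarith [hx.2]⟩ (one_sub_mem hy) (by linarith [hx.2])]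
    congr 2; ring

theorem rot_four (q : MobiusBand) : rot (rot (rot (rot q))) = q := by
  obtain ⟨⟨x, y⟩, ⟨hx, hy⟩, rfl⟩ := psi_surj q
  rw [rot_rot hx hy, rot_rot hx (one_sub_mem hy)]
  congr 2; ring

noncomputable def rotH : MobiusBand ≃ₜ MobiusBand where
  toFun := rot
  invFun q := rot (rot (rot q))
  left_inv := rot_four
  right_inv := rot_four
  continuous_toFun := continuous_rot
  continuous_invFun := continuous_rot.comp (continuous_rot.comp continuous_rot)

theorem mem_A_or (q : MobiusBand) : q ∈ A ∨ rot q ∈ A := by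
  obtain ⟨⟨x, y⟩, ⟨hx, hy⟩, rfl⟩ := psi_surj q
  by_cases h : x ∈ Set.Ioo (0 : ℝ) 1
  · exact Or.inl ⟨(x, y), ⟨h, hy⟩, rfl⟩
  · right
    rcases hx.1.eq_or_lt with h0 | h0
    · have h0' : x = 0 := h0.symm
      subst h0'
      rw [rot_psi_le hx hy (by norm_num)]
      exact ⟨(0 + 1 / 2, y), ⟨by constructor <;> norm_num, hy⟩, rfl⟩
    · have h1 : x = 1 := by
        by_contra h1
        exact h ⟨h0, lt_of_le_of_ne hx.2 h1⟩
      subst h1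
      rw [rot_psi_ge hx hy (by norm_num)]
      exact ⟨(1 - 1 / 2, 1 - y), ⟨by constructor <;> norm_num, one_sub_mem hy⟩, rfl⟩

theorem locGood (q : MobiusBand) : LocGood Set.univ q := by
  rcases mem_A_or q with h | h
  · exact locGood_A h
  · have := LocGood.transport rotH.symm.toEquiv.toPartialEquiv rotH.symm.continuous.continuousOn
      rotH.continuous.continuousOn (p := rot q) trivial (locGood_A h)
    have e : rotH.symm.toEquiv.toPartialEquiv (rot q) = q := rotH.symm_apply_apply q
    rw [e] at this
    exact this

theorem rot_mem_A {x y : ℝ} (h : (x, y) ∈ strip) : rot (psi (x, y)) ∈ A ↔ x ≠ 1 / 2 := by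
  have hx : x ∈ Set.Icc (0 : ℝ) 1 := Set.Ioo_subset_Icc_self h.1
  have hx0 : 0 < x := h.1.1
  have hx1 : x < 1 := h.1.2
  have hy : y ∈ Set.Icc (0 : ℝ) 1 := h.2
  rcases le_total x (1 / 2) with h' | h'
  · rw [rot_psi_le hx hy h', psi_of_mem (half_mem ⟨by linarith, by linarith⟩ hy), mk_mem_A]
    constructor
    · rintro ⟨_, h2⟩ rfl; norm_num at h2
    · intro hne; exact ⟨by simp only; linarith, by
        have := lt_of_le_of_ne h' hne
        simp only; linarith⟩
  · rw [rot_psi_ge hx hy h', psi_of_mem (half_mem ⟨by linarith, by linarith⟩ (one_sub_mem hy)),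
      mk_mem_A]
    constructor
    · rintro ⟨h1, h2⟩ rfl; norm_num at h1
    · intro hne; exact ⟨by
        have := lt_of_le_of_ne h' (Ne.symm hne)
        simp only; linarith, by simp only; linarith⟩

theorem rankOne : RankOne (Set.univ : Set MobiusBand) := by
  have hB : HasLogs (rot ⁻¹' A) :=
    hasLogs_A.transport (e := rotH.symm) (e' := rotH) rotH.symm.continuous.continuousOn
      (fun x hx => by
        show rotH (rotH.symm x) ∈ A
        rwa [rotH.apply_symm_apply]) rotH.continuous.continuousOn (fun x hx => hx)
      (fun y _ => rotH.symm_apply_apply y)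
  have hU : A ∪ rot ⁻¹' A = Set.univ := Set.eq_univ_of_forall mem_A_or
  rw [← hU]
  refine rankOne_union (C := psi '' (Set.Ioo 0 (1/2) ×ˢ Set.Icc 0 1))
    (D := psi '' (Set.Ioo (1/2) 1 ×ˢ Set.Icc 0 1)) isOpen_A (isOpen_A.preimage continuous_rot)
    hasLogs_A hB ?_ ?_ ?_
  · exact (isPreconnected_Ioo.prod isPreconnected_Icc).image _ continuous_psi.continuousOn
  · exact (isPreconnected_Ioo.prod isPreconnected_Icc).image _ continuous_psi.continuousOn
  · ext q
    constructor
    · rintro ⟨⟨⟨x, y⟩, h, rfl⟩, h2⟩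
      have := (rot_mem_A h).mp h2
      rcases lt_or_gt_of_ne this with h3 | h3
      · exact Or.inl ⟨(x, y), ⟨⟨h.1.1, h3⟩, h.2⟩, rfl⟩
      · exact Or.inr ⟨(x, y), ⟨⟨h3, h.1.2⟩, h.2⟩, rfl⟩
    · rintro (⟨⟨x, y⟩, ⟨⟨h1, h1'⟩, h2⟩, rfl⟩ | ⟨⟨x, y⟩, ⟨⟨h1, h1'⟩, h2⟩, rfl⟩)
      · have h : (x, y) ∈ strip := ⟨⟨h1, by simp only at *; linarith⟩, h2⟩
        exact ⟨⟨_, h, rfl⟩, (rot_mem_A h).mpr (ne_of_lt h1')⟩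
      · have h : (x, y) ∈ strip := ⟨⟨by simp only at *; linarith, h1'⟩, h2⟩
        exact ⟨⟨_, h, rfl⟩, (rot_mem_A h).mpr (ne_of_gt h1)⟩

theorem preconnected : IsPreconnected (Set.univ : Set MobiusBand) := by
  have : (Set.univ : Set MobiusBand) = psi '' (Set.Icc 0 1 ×ˢ Set.Icc 0 1) := by
    symm
    apply Set.eq_univ_of_forall
    intro q
    obtain ⟨z, hz, h⟩ := psi_surj q
    exact ⟨z, hz, h⟩
  rw [this]
  exact (isPreconnected_Icc.prod isPreconnected_Icc).image _ continuous_psi.continuousOn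

theorem not_hasLogs : ¬ HasLogs (Set.univ : Set MobiusBand) := by
  intro h
  let g : MobiusBand → ℂ := Quot.lift
    (fun z : UnitSquare => Complex.exp (2 * Real.pi * Complex.I * ((z : ℝ × ℝ).1 : ℂ))) (by
      rintro a b ⟨h0, h1, -⟩
      simp [h0, h1])
  have hg : Continuous g := by
    apply isQuotientMap_mk.continuous_iff.mpr
    show Continuous (fun z : UnitSquare => Complex.exp (2 * Real.pi * Complex.I * ((z : ℝ × ℝ).1 : ℂ)))
    fun_prop
  have hgm : ∀ t ∈ Set.Icc (0 : ℝ) 1, g (psi (t, 1 / 2)) =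
      Complex.exp (2 * Real.pi * Complex.I * (t : ℂ)) := by
    intro t ht
    rw [psi_of_mem (half_mem ht (by constructor <;> norm_num))]
    rfl
  obtain ⟨L, hL, eL⟩ := h g hg.continuousOn (by
    intro q _
    obtain ⟨z, rfl⟩ := isQuotientMap_mk.surjective q
    exact Complex.exp_ne_zero _)
  rw [continuousOn_univ] at hL
  obtain ⟨k, hk⟩ := log_const (S := Set.Icc (0 : ℝ) 1)
    (F := fun t : ℝ => L (psi (t, 1 / 2)) - 2 * Real.pi * Complex.I * (t : ℂ)) isPreconnected_Icc (by
      refine Continuous.continuousOn ?_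
      exact (hL.comp (continuous_psi.comp (by fun_prop))).sub (by fun_prop)) (by
      intro t ht
      rw [Complex.exp_sub, eL _ trivial, hgm t ht, div_self (Complex.exp_ne_zero _)])
  have h0 := hk 0 (by simp)
  have h1 := hk 1 (by simp)
  have hp : psi (0, 1 / 2) = psi (1, 1 / 2) := by
    have := psi_glue (y := 1 / 2) (by constructor <;> norm_num)
    norm_num at this ⊢
    exact this
  simp only [hp] at h0
  apply Complex.two_pi_I_ne_zero
  push_cast at h0 h1
  linear_combination h0 - h1

theorem exists_not_locTriv {O : Set MobiusBand} (hO : IsOpen O) (hne : O.Nonempty) :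
    ∃ q ∈ O, ¬ LocTriv Set.univ q := by
  obtain ⟨q, hq⟩ := hne
  obtain ⟨z, hz, rfl⟩ := psi_surj q
  have hcl : z ∈ closure (Set.Ioo (0 : ℝ) 1 ×ˢ Set.Ioo (0 : ℝ) 1) := by
    rw [closure_prod_eq, closure_Ioo zero_ne_one]; exact hz
  obtain ⟨w, hw, hw1, hw2⟩ := mem_closure_iff.mp hcl (psi ⁻¹' O) (hO.preimage continuous_psi) hq
  refine ⟨psi w, hw, fun h => ?_⟩
  have hws : w ∈ strip := ⟨hw1, Set.Ioo_subset_Icc_self hw2⟩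
  have hA : psi w ∈ A := ⟨w, hws, rfl⟩
  have h1 := LocTriv.transport chart.symm continuousOn_kappa continuous_psi.continuousOn hA
    (h.of_nhds (nhds_A hA).symm)
  have e : chart.symm (psi w) = w := chart.left_inv hws
  rw [e] at h1
  exact not_locTriv_plane w (h1.of_nhds (by
    show 𝓝[strip] w = _
    rw [nhdsWithin_univ, strip_nhds hws hw2]))

end Mob

open Finset
open scoped Topology

namespace SComplex
variable {V : Type} [DecidableEq V] [Fintype V] {M : SComplex V}

theorem mobius_equiv (hM : M.IsMobius) : ∃ e : PartialEquiv MobiusBand (V → ℝ),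
    e.source = Set.univ ∧ e.target = M.realization ∧ Continuous e ∧
      ContinuousOn e.symm M.realization := by
  classical
  obtain ⟨φ⟩ := hM
  let inv : (V → ℝ) → MobiusBand := fun f =>
    if h : f ∈ M.realization then φ ⟨f, h⟩ else Mob.psi (0, 0)
  have hinv : ∀ f (h : f ∈ M.realization), inv f = φ ⟨f, h⟩ := fun f h => by simp [inv, h]
  refine ⟨{ toFun := fun q => (φ.symm q : V → ℝ)
            invFun := inv
            source := Set.univ
            target := M.realization
            map_source' := fun q _ => (φ.symm q).2
            map_target' := fun _ _ => trivial
            left_inv' := fun q _ => ?_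
            right_inv' := fun f hf => ?_ }, rfl, rfl, ?_, ?_⟩
  · rw [hinv _ (φ.symm q).2]; simp
  · rw [hinv _ hf]; simp
  · exact continuous_subtype_val.comp φ.symm.continuous
  · rw [continuousOn_iff_continuous_domRestrict]
    have : M.realization.domRestrict inv = φ := by
      funext x
      exact hinv _ x.2
    show Continuous (M.realization.domRestrict inv)
    rw [this]
    exact φ.continuous

theorem real_locGood (hM : M.IsMobius) {p : V → ℝ} (hp : p ∈ M.realization) :
    LocGood M.realization p := by
  obtain ⟨e, hs, ht, hc, hc'⟩ := mobius_equiv hM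
  have h := LocGood.transport e hc.continuousOn (ht ▸ hc') (p := e.symm p) (by simp [hs])
    (hs ▸ Mob.locGood _)
  rwa [e.right_inv (ht ▸ hp), ht] at h

theorem real_rankOne (hM : M.IsMobius) : RankOne M.realization := by
  obtain ⟨e, hs, ht, hc, hc'⟩ := mobius_equiv hM
  refine RankOne.transport (S := Set.univ) (T := M.realization) (e := e) (e' := e.symm) hc.continuousOn ?_ hc' (fun _ _ => trivial) ?_ Mob.rankOne
  · intro q _; rw [← ht]; exact e.mapsTo (by simp [hs])
  · intro f hf; exact e.right_inv (ht ▸ hf)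

theorem real_not_hasLogs (hM : M.IsMobius) : ¬ HasLogs M.realization := by
  obtain ⟨e, hs, ht, hc, hc'⟩ := mobius_equiv hM
  intro h
  refine Mob.not_hasLogs (h.transport (e := e.symm) (e' := e) hc' (fun _ _ => trivial)
    hc.continuousOn ?_ ?_)
  · intro q _; rw [← ht]; exact e.mapsTo (by simp [hs])
  · intro q _; exact e.left_inv (by simp [hs])

theorem real_preconnected (hM : M.IsMobius) : IsPreconnected M.realization := by
  obtain ⟨e, hs, ht, hc, hc'⟩ := mobius_equiv hM
  have : M.realization = e '' Set.univ := by
    rw [← hs, e.image_source_eq_target, ht]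
  rw [this]
  exact Mob.preconnected.image _ hc.continuousOn

theorem real_exists_not_locTriv (hM : M.IsMobius) {O : Set (V → ℝ)} (hO : IsOpen O)
    (hne : (M.realization ∩ O).Nonempty) : ∃ p ∈ M.realization ∩ O, ¬ LocTriv M.realization p := by
  obtain ⟨e, hs, ht, hc, hc'⟩ := mobius_equiv hM
  obtain ⟨f, hf, hfO⟩ := hne
  obtain ⟨q, hq, hn⟩ := Mob.exists_not_locTriv (hO.preimage hc) ⟨e.symm f, by
    show e (e.symm f) ∈ O
    rwa [e.right_inv (ht ▸ hf)]⟩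
  have hm : e q ∈ M.realization := by rw [← ht]; exact e.mapsTo (by simp [hs])
  refine ⟨e q, ⟨hm, hq⟩, fun h => hn ?_⟩
  have h' := LocTriv.transport e.symm (p := e q) (by simpa [ht] using hc') hc.continuousOn
    (by simpa [ht] using hm) (by simpa [ht] using h)
  simpa [hs, e.left_inv (show q ∈ e.source by simp [hs])] using h'

theorem face_of_pos {f : V → ℝ} (hf : f ∈ M.realization) {T : Finset V} (hT : T.Nonempty)
    (hpos : ∀ v ∈ T, 0 < f v) : T ∈ M.faces := by
  obtain ⟨σ, hσ, h0, -, -⟩ := hf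
  refine M.down_closed σ hσ T ?_ hT
  intro v hv
  by_contra h
  exact (hpos v hv).ne' (h0 v h)

theorem real_nonneg {f : V → ℝ} (hf : f ∈ M.realization) (v : V) : 0 ≤ f v := by
  obtain ⟨σ, hσ, h0, h1, h2⟩ := hf
  exact h1 v

theorem real_sum {f : V → ℝ} (hf : f ∈ M.realization) : ∑ v, f v = 1 := by
  obtain ⟨σ, hσ, h0, h1, h2⟩ := hf
  exact h2

theorem exists_pos {f : V → ℝ} (hf : f ∈ M.realization) : ∃ v, 0 < f v := by
  by_contra! h
  have : ∑ v, f v ≤ 0 := Finset.sum_nonpos fun v _ => h v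
  rw [real_sum hf] at this
  linarith

theorem seg_mem {σ : Finset V} (hσ : σ ∈ M.faces) {x y : V} (hx : x ∈ σ) (hy : y ∈ σ) {t : ℝ}
    (ht : t ∈ Set.Icc (0 : ℝ) 1) :
    (1 - t) • (Pi.single x 1 : V → ℝ) + t • (Pi.single y 1 : V → ℝ) ∈ M.realization := by
  refine ⟨σ, hσ, ?_, ?_, ?_⟩
  · intro v hv
    have h1 : v ≠ x := fun h => hv (h ▸ hx)
    have h2 : v ≠ y := fun h => hv (h ▸ hy)
    simp [h1, h2]
  · intro v
    have h1 := ht.1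
    have h2 := ht.2
    simp only [Pi.add_apply, Pi.smul_apply, Pi.single_apply, smul_eq_mul]
    split_ifs <;> linarith
  · simp [Finset.sum_add_distrib, Pi.single_apply]

theorem single_mem {x : V} (hx : {x} ∈ M.faces) : (Pi.single x 1 : V → ℝ) ∈ M.realization := by
  have := seg_mem hx (mem_singleton_self x) (mem_singleton_self x) (t := 0) (by simp)
  simpa using this

theorem vert_of_edge {x y : V} (h : {x, y} ∈ M.faces) : {x} ∈ M.faces ∧ {y} ∈ M.faces :=
  ⟨M.down_closed _ h _ (by simp) (by simp), M.down_closed _ h _ (by simp) (by simp)⟩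

/-- vertex links are connected -/
theorem link_conn (hM : M.IsMobius) (v : V) (A : Set V)
    (hA : ∀ x y, x ≠ v → y ≠ v → {v, x, y} ∈ M.faces → x ∈ A → y ∈ A) {x y : V} (hxv : x ≠ v)
    (hyv : y ≠ v) (hx : {v, x} ∈ M.faces) (hy : {v, y} ∈ M.faces) (hxA : x ∈ A) : y ∈ A := by
  by_contra hyA
  have hv := (vert_of_edge hx).1
  have hp := single_mem hv
  have hU : {f : V → ℝ | 0 < f v} ∈ 𝓝[M.realization] (Pi.single v 1 : V → ℝ) := by
    apply mem_nhdsWithin_of_mem_nhds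
    apply (isOpen_lt continuous_const (continuous_apply v)).mem_nhds
    simp
  obtain ⟨W, hW, hWU, hWK, hc, -⟩ := real_locGood hM hp _ hU
  have key : ∀ a, a ≠ v → {v, a} ∈ M.faces → ∃ f ∈ W \ {(Pi.single v 1 : V → ℝ)}, 0 < f a := by
    intro a hav ha
    have hcont : Continuous (fun t : ℝ =>
        (1 - t) • (Pi.single v 1 : V → ℝ) + t • (Pi.single a 1 : V → ℝ)) := by fun_prop
    have ht : Filter.Tendsto (fun t : ℝ =>
        (1 - t) • (Pi.single v 1 : V → ℝ) + t • (Pi.single a 1 : V → ℝ)) (𝓝[>] 0)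
        (𝓝[M.realization] (Pi.single v 1 : V → ℝ)) := by
      refine tendsto_nhdsWithin_iff.mpr ⟨?_, ?_⟩
      · have := hcont.tendsto 0
        simp only [sub_zero, one_smul, zero_smul, add_zero] at this
        exact this.mono_left nhdsWithin_le_nhds
      · filter_upwards [Ioo_mem_nhdsGT (zero_lt_one' ℝ)] with t ht
        exact seg_mem ha (by simp) (by simp) ⟨ht.1.le, ht.2.le⟩
    obtain ⟨t, htW, ht0⟩ := ((ht.eventually hW).and self_mem_nhdsWithin).exists
    have ht0' : 0 < t := ht0
    have hpos : 0 < ((1 - t) • (Pi.single v 1 : V → ℝ) + t • (Pi.single a 1 : V → ℝ)) a := by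
      simp [hav, ht0']
    refine ⟨_, ⟨htW, fun h => ?_⟩, hpos⟩
    have h' : (1 - t) • (Pi.single v 1 : V → ℝ) + t • (Pi.single a 1 : V → ℝ) = Pi.single v 1 := h
    rw [h'] at hpos
    simp [hav] at hpos
  have hop : ∀ B : Set V, IsOpen {f : V → ℝ | ∃ b ∈ B, 0 < f b} := by
    intro B
    have : {f : V → ℝ | ∃ b ∈ B, 0 < f b} = ⋃ b ∈ B, {f : V → ℝ | 0 < f b} := by
      ext f; simp
    rw [this]
    exact isOpen_biUnion fun b _ => isOpen_lt continuous_const (continuous_apply b)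
  obtain ⟨f, hfW, ⟨a, ⟨haA, hav⟩, ha⟩, ⟨b, ⟨hbA, hbv⟩, hb⟩⟩ :=
    hc {f | ∃ b ∈ {a | a ∈ A ∧ a ≠ v}, 0 < f b} {f | ∃ b ∈ {a | a ∉ A ∧ a ≠ v}, 0 < f b} (hop _) (hop _) (by
      rintro f ⟨hfW, hfp⟩
      have hfK := hWK hfW
      have : ∃ w, w ≠ v ∧ 0 < f w := by
        by_contra! hno
        apply hfp
        have hz : ∀ w, w ≠ v → f w = 0 := fun w hw => le_antisymm (hno w hw) (real_nonneg hfK w)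
        have hsum := real_sum hfK
        rw [Finset.sum_eq_single v (fun w _ hw => hz w hw) (by simp)] at hsum
        show f = _
        funext w
        by_cases hw : w = v
        · subst hw; simp [hsum]
        · simp [hw, hz w hw]
      obtain ⟨w, hwv, hw⟩ := this
      by_cases hwA : w ∈ A
      · exact Or.inl ⟨w, ⟨hwA, hwv⟩, hw⟩
      · exact Or.inr ⟨w, ⟨hwA, hwv⟩, hw⟩)
      (by
        obtain ⟨f, hf, hfx⟩ := key x hxv hx
        exact ⟨f, hf, x, ⟨hxA, hxv⟩, hfx⟩)
      (by
        obtain ⟨f, hf, hfx⟩ := key y hyv hy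
        exact ⟨f, hf, y, ⟨hyA, hyv⟩, hfx⟩)
  refine hbA (hA a b hav hbv (face_of_pos (hWK hfW.1) (by simp) ?_) haA)
  intro w hw
  simp only [mem_insert, mem_singleton] at hw
  rcases hw with rfl | rfl | rfl
  · exact hWU hfW.1
  · exact ha
  · exact hb

/-- the complex is connected -/
theorem vert_conn (hM : M.IsMobius) (A : Set V)
    (hA : ∀ x y, {x, y} ∈ M.faces → x ∈ A → y ∈ A) {x y : V}
    (hx : {x} ∈ M.faces) (hy : {y} ∈ M.faces) (hxA : x ∈ A) : y ∈ A := by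
  by_contra hyA
  have hop : ∀ B : Set V, IsOpen {f : V → ℝ | ∃ b ∈ B, 0 < f b} := by
    intro B
    have : {f : V → ℝ | ∃ b ∈ B, 0 < f b} = ⋃ b ∈ B, {f : V → ℝ | 0 < f b} := by
      ext f; simp
    rw [this]
    exact isOpen_biUnion fun b _ => isOpen_lt continuous_const (continuous_apply b)
  obtain ⟨f, hfK, ⟨a, haA, ha⟩, ⟨b, hbA, hb⟩⟩ :=
    real_preconnected hM {f | ∃ b ∈ A, 0 < f b} {f | ∃ b ∈ Aᶜ, 0 < f b} (hop _) (hop _) (by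
      intro f hf
      obtain ⟨w, hw⟩ := exists_pos hf
      by_cases hwA : w ∈ A
      · exact Or.inl ⟨w, hwA, hw⟩
      · exact Or.inr ⟨w, hwA, hw⟩)
      ⟨_, single_mem hx, x, hxA, by simp⟩ ⟨_, single_mem hy, y, hyA, by simp⟩
  refine hbA (hA a b (face_of_pos hfK (by simp) ?_) haA)
  intro w hw
  simp only [mem_insert, mem_singleton] at hw
  rcases hw with rfl | rfl
  · exact ha
  · exact hb

/-- a Möbius strip is not a single simplex -/
theorem not_simplex (hM : M.IsMobius) {T : Finset V} (hT : T ∈ M.faces)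
    (h : ∀ σ ∈ M.faces, σ ⊆ T) : False := by
  apply real_not_hasLogs hM
  obtain ⟨x, hx⟩ := M.nonempty_of_mem T hT
  have hx' : {x} ∈ M.faces := M.down_closed T hT _ (by simpa using hx) (by simp)
  have hconv : Convex ℝ M.realization := by
    rintro f ⟨σ, hσ, f0, f1, f2⟩ g ⟨τ, hτ, g0, g1, g2⟩ a b ha hb hab
    refine ⟨T, hT, ?_, ?_, ?_⟩
    · intro v hv
      simp [f0 v (fun h' => hv (h σ hσ h')), g0 v (fun h' => hv (h τ hτ h'))]
    · intro v
      have := mul_nonneg ha (f1 v)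
      have := mul_nonneg hb (g1 v)
      simp; linarith
    · simp [Finset.sum_add_distrib, ← Finset.mul_sum, f2, g2, hab]
  exact StarConvex.hasLogs (single_mem hx') (hconv.starConvex (single_mem hx'))

end SComplex

open Finset
open scoped Topology

namespace SComplex
variable {V : Type} [DecidableEq V] [Fintype V] {M : SComplex V}

theorem sum_decomp {σ : Finset V} {v0 v1 : V} (h0 : v0 ∈ σ) (h1 : v1 ∈ σ) (h01 : v0 ≠ v1)
    (f : V → ℝ) (hf : ∀ v, v ∉ σ → f v = 0) :
    ∑ v, f v = f v0 + f v1 + ∑ v : {v // v ∈ (σ.erase v0).erase v1}, f v := by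
  rw [Finset.sum_coe_sort ((σ.erase v0).erase v1) f, add_assoc,
    Finset.add_sum_erase _ _ (by simp [h1, h01.symm]), Finset.add_sum_erase _ _ h0]
  exact (Finset.sum_subset (Finset.subset_univ _) fun v _ hv => hf v hv).symm

theorem max_face_locTriv {σ : Finset V} (hσ : σ ∈ M.faces) (hmax : ∀ τ ∈ M.faces, σ ⊆ τ → τ = σ)
    (hc : 4 ≤ σ.card) {p : V → ℝ} (hp : p ∈ M.realization) (hpos : ∀ v ∈ σ, 0 < p v) :
    LocTriv M.realization p := by
  classical
  obtain ⟨v0, h0, v1, h1, h01⟩ := Finset.one_lt_card.mp (by omega : 1 < σ.card)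
  set ρ := (σ.erase v0).erase v1 with hρ
  have hcard : 2 ≤ ρ.card := by
    rw [hρ, Finset.card_erase_of_mem (by simp [h1, h01.symm]), Finset.card_erase_of_mem h0]; omega
  have hρσ : ∀ {v}, v ∈ ρ → v ≠ v0 ∧ v ≠ v1 ∧ v ∈ σ := by
    intro v hv
    simp only [hρ, mem_erase] at hv
    tauto
  set A : Set (V → ℝ) := M.realization ∩ {f | ∀ v ∈ σ, 0 < f v} with hA
  have hO : IsOpen {f : V → ℝ | ∀ v ∈ σ, 0 < f v} := by
    have : {f : V → ℝ | ∀ v ∈ σ, 0 < f v} = ⋂ v ∈ σ, {f : V → ℝ | 0 < f v} := by ext f; simp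
    rw [this]
    exact isOpen_biInter_finset fun v _ => isOpen_lt continuous_const (continuous_apply v)
  have hsupp : ∀ f ∈ A, ∀ v, v ∉ σ → f v = 0 := by
    rintro f ⟨hf, hfO⟩ v hv
    by_contra hne
    have h : insert v σ ∈ M.faces := by
      refine face_of_pos hf (by simp) ?_
      intro w hw
      rcases mem_insert.mp hw with rfl | hw
      · exact lt_of_le_of_ne (real_nonneg hf _) (Ne.symm hne)
      · exact hfO w hw
    exact hv (hmax _ h (subset_insert _ _) ▸ mem_insert_self v σ)
  let F : ℝ × ({v // v ∈ ρ} → ℝ) → V → ℝ := fun q v =>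
    if v = v0 then 1 - q.1 - ∑ w, q.2 w else if v = v1 then q.1 else
      if h : v ∈ ρ then q.2 ⟨v, h⟩ else 0
  have F0 : ∀ q, F q v0 = 1 - q.1 - ∑ w, q.2 w := fun q => by simp [F]
  have F1 : ∀ q, F q v1 = q.1 := fun q => by simp [F, h01.symm]
  have F2 : ∀ q (v : {v // v ∈ ρ}), F q v = q.2 v := fun q v => by
    simp [F, (hρσ v.2).1, (hρσ v.2).2.1]
  have F3 : ∀ q v, v ∉ σ → F q v = 0 := fun q v hv => by
    have a : v ≠ v0 := fun h => hv (h ▸ h0)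
    have b : v ≠ v1 := fun h => hv (h ▸ h1)
    have c : v ∉ ρ := fun h => hv (hρσ h).2.2
    simp [F, a, b, c]
  have hσcases : ∀ v ∈ σ, v = v0 ∨ v = v1 ∨ v ∈ ρ := by
    intro v hv
    simp only [hρ, mem_erase]
    tauto
  let e : PartialEquiv (ℝ × ({v // v ∈ ρ} → ℝ)) (V → ℝ) :=
    { toFun := F
      invFun := fun f => (f v1, fun v => f v)
      source := {q | 0 < q.1 ∧ (∀ v, 0 < q.2 v) ∧ 0 < 1 - q.1 - ∑ w, q.2 w}
      target := A
      map_source' := by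
        rintro q ⟨q1, q2, q3⟩
        have hpp : ∀ v ∈ σ, 0 < F q v := by
          intro v hv
          rcases hσcases v hv with rfl | rfl | h
          · rw [F0]; exact q3
          · rw [F1]; exact q1
          · exact (F2 q ⟨v, h⟩).symm ▸ q2 _
        refine ⟨⟨σ, hσ, F3 q, ?_, ?_⟩, hpp⟩
        · intro v
          by_cases hv : v ∈ σ
          · exact (hpp v hv).le
          · exact (F3 q v hv).ge
        · rw [sum_decomp h0 h1 h01 _ (F3 q), F0, F1, Finset.sum_congr rfl fun v _ => F2 q v]
          ring
      map_target' := by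
        intro f hf
        refine ⟨hf.2 v1 h1, fun v => hf.2 v (hρσ v.2).2.2, ?_⟩
        have := sum_decomp h0 h1 h01 f (hsupp f hf)
        rw [real_sum hf.1] at this
        have h := hf.2 v0 h0
        show 0 < 1 - f v1 - ∑ v : {v // v ∈ ρ}, f v
        linarith
      left_inv' := by
        intro q hq
        refine Prod.ext ?_ ?_
        · exact F1 q
        · funext v; exact F2 q v
      right_inv' := by
        intro f hf
        funext v
        have := sum_decomp h0 h1 h01 f (hsupp f hf)
        rw [real_sum hf.1] at this
        by_cases hv : v ∈ σ
        · rcases hσcases v hv with rfl | rfl | h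
          · rw [F0]
            show 1 - f v1 - ∑ v : {v // v ∈ ρ}, f v = _
            linarith
          · rw [F1]
          · exact F2 _ ⟨v, h⟩
        · rw [F3 _ v hv, hsupp f hf v hv] }
  have hFc : Continuous F := by
    refine continuous_pi fun v => ?_
    simp only [F]
    split_ifs
    · fun_prop
    · fun_prop
    · fun_prop
    · fun_prop
  have hsrc : IsOpen e.source := by
    have h' : e.source = {q : ℝ × ({v // v ∈ ρ} → ℝ) | 0 < q.1} ∩
        ((⋂ v, {q | 0 < q.2 v}) ∩ {q | 0 < 1 - q.1 - ∑ w, q.2 w}) := by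
      ext q; simp [e]
    rw [h']
    refine (isOpen_lt continuous_const (by fun_prop)).inter (IsOpen.inter ?_ ?_)
    · exact isOpen_iInter_of_finite fun v => isOpen_lt continuous_const (by fun_prop)
    · exact isOpen_lt continuous_const (by fun_prop)
  have hpA : p ∈ e.target := ⟨hp, hpos⟩
  have hps := e.map_target hpA
  have h := LocTriv.transport e hFc.continuousOn (by
      have : Continuous (fun f : V → ℝ => ((f v1, fun v => f v) : ℝ × ({v // v ∈ ρ} → ℝ))) := by
        fun_prop
      exact this.continuousOn) hps
    ((locTriv_prod (by
      rw [rank_fun']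
      simp only [Fintype.card_coe]
      exact_mod_cast (by omega : 1 < ρ.card)) (e.symm p)).of_nhds (by
        rw [nhdsWithin_univ, hsrc.nhdsWithin_eq hps]))
  rw [e.right_inv hpA] at h
  refine h.of_nhds ?_
  show 𝓝[M.realization ∩ _] p = _
  rw [nhdsWithin_inter_of_mem']
  exact mem_nhdsWithin_of_mem_nhds (hO.mem_nhds hpos)

theorem bary_mem {σ : Finset V} (hσ : σ ∈ M.faces) :
    ∃ f ∈ M.realization, ∀ v ∈ σ, 0 < f v := by
  have hc : (0 : ℝ) < σ.card := by
    exact_mod_cast Finset.card_pos.mpr (M.nonempty_of_mem σ hσ)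
  refine ⟨fun v => if v ∈ σ then (σ.card : ℝ)⁻¹ else 0, ⟨σ, hσ, ?_, ?_, ?_⟩, ?_⟩
  · intro v hv; simp [hv]
  · intro v
    dsimp only
    split_ifs <;> positivity
  · simp [hc.ne']
  · intro v hv
    simp only [hv, if_true]
    positivity

theorem dim_le (hM : M.IsMobius) {τ : Finset V} (hτ : τ ∈ M.faces) : τ.card ≤ 3 := by
  by_contra hcon
  obtain ⟨σ, hσ, hmax⟩ := M.faces.exists_max_image Finset.card ⟨τ, hτ⟩
  have h4 : 4 ≤ σ.card := by have := hmax τ hτ; omega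
  have hO : IsOpen {f : V → ℝ | ∀ v ∈ σ, 0 < f v} := by
    have : {f : V → ℝ | ∀ v ∈ σ, 0 < f v} = ⋂ v ∈ σ, {f : V → ℝ | 0 < f v} := by ext f; simp
    rw [this]
    exact isOpen_biInter_finset fun v _ => isOpen_lt continuous_const (continuous_apply v)
  obtain ⟨f, hf, hfp⟩ := bary_mem hσ
  obtain ⟨p, ⟨hp, hpO⟩, hn⟩ := real_exists_not_locTriv hM hO ⟨f, hf, hfp⟩
  exact hn (max_face_locTriv hσ (fun τ hτ hs => (Finset.eq_of_subset_of_card_le hs (hmax τ hτ)).symm)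
    h4 hp hpO)

end SComplex

open Finset
open scoped Topology

namespace SComplex
variable {V : Type} [DecidableEq V] [Fintype V] {M : SComplex V}

theorem edge_two (hM : M.IsMobius) {a b w1 w2 w3 : V} (hab : a ≠ b)
    (h1 : {a, b, w1} ∈ M.faces) (h2 : {a, b, w2} ∈ M.faces) (h3 : {a, b, w3} ∈ M.faces)
    (h1a : w1 ≠ a) (h1b : w1 ≠ b) (h2a : w2 ≠ a) (h2b : w2 ≠ b) (h3a : w3 ≠ a) (h3b : w3 ≠ b)
    (h12 : w1 ≠ w2) (h13 : w1 ≠ w3) (h23 : w2 ≠ w3) : False := by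
  set p : V → ℝ := fun v => if v = a then 1 / 2 else if v = b then 1 / 2 else 0 with hp
  set c : ℝ → V → ℝ → V → ℝ := fun r w θ v =>
    if v = a then (1 - r * Real.sin θ + r * Real.cos θ) / 2 else
    if v = b then (1 - r * Real.sin θ - r * Real.cos θ) / 2 else
    if v = w then r * Real.sin θ else 0 with hc
  have ca : ∀ r w θ, c r w θ a = (1 - r * Real.sin θ + r * Real.cos θ) / 2 := by simp [hc]
  have cb : ∀ r w θ, c r w θ b = (1 - r * Real.sin θ - r * Real.cos θ) / 2 := by
    simp [hc, hab.symm]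
  have csum : ∀ r w θ, w ≠ a → w ≠ b → ∑ v, c r w θ v = 1 := by
    intro r w θ hwa hwb
    have hss : ({a, b, w} : Finset V) ⊆ univ := subset_univ _
    rw [← Finset.sum_subset hss (fun v _ hv => by
      simp only [mem_insert, mem_singleton, not_or] at hv
      simp [hc, hv.1, hv.2.1, hv.2.2])]
    rw [Finset.sum_insert (by simp [hab, hwa.symm]), Finset.sum_pair hwb.symm, ca, cb]
    simp [hc, hwa, hwb]
    ring
  have cK : ∀ r w θ, 0 ≤ r → r ≤ 1 / 2 → w ≠ a → w ≠ b → {a, b, w} ∈ M.faces →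
      θ ∈ Set.Icc 0 Real.pi → c r w θ ∈ M.realization := by
    intro r w θ hr hr' hwa hwb hw hθ
    have hs := Real.sin_nonneg_of_mem_Icc hθ
    refine ⟨_, hw, ?_, ?_, csum r w θ hwa hwb⟩
    · intro v hv
      simp only [mem_insert, mem_singleton, not_or] at hv
      simp [hc, hv.1, hv.2.1, hv.2.2]
    · intro v
      have := Real.sin_le_one θ
      have := Real.cos_le_one θ
      have := Real.neg_one_le_cos θ
      simp only [hc]
      split_ifs
      · nlinarith
      · nlinarith
      · positivity
      · exact le_rfl
  have hp0 : ∀ w, c 0 w 0 = p := by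
    intro w
    funext v
    simp [hc, hp]
  have hpK : p ∈ M.realization := by
    rw [← hp0 w1]
    exact cK 0 w1 0 le_rfl (by norm_num) h1a h1b h1 ⟨le_rfl, Real.pi_pos.le⟩
  have hU : {f : V → ℝ | 0 < f a ∧ 0 < f b} ∈ 𝓝[M.realization] p := by
    apply mem_nhdsWithin_of_mem_nhds
    apply ((isOpen_lt continuous_const (continuous_apply a)).inter
      (isOpen_lt continuous_const (continuous_apply b))).mem_nhds
    constructor
    · simp [hp]
    · simp [hp]
  obtain ⟨W, hW, hWU, hWK, -, hR⟩ := real_locGood hM hpK _ hU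
  let G : V → (V → ℝ) → ℂ := fun w f =>
    ((f a - f b : ℝ) : ℂ) + ((2 * f w - (1 - f a - f b) : ℝ) : ℂ) * Complex.I
  have hG : ∀ w, Continuous (G w) := fun w => by simp only [G]; fun_prop
  have hG0 : ∀ w, w ≠ a → w ≠ b → ∀ f ∈ W \ {p}, G w f ≠ 0 := by
    intro w hwa hwb f hf hz
    have hfK := hWK hf.1
    obtain ⟨hfa, hfb⟩ := hWU hf.1
    have e1 : f a - f b = 0 := by simpa [G] using congrArg Complex.re hz
    have e2 : 2 * f w - (1 - f a - f b) = 0 := by simpa [G] using congrArg Complex.im hz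
    have hsum := real_sum hfK
    rw [← Finset.add_sum_erase _ _ (mem_univ a), ← Finset.add_sum_erase _ f (a := b)
      (by simp [hab.symm])] at hsum
    by_cases hw : 0 < f w
    · have hz : ∀ v, v ≠ a → v ≠ b → v ≠ w → f v = 0 := by
        intro v hva hvb hvw
        by_contra hne
        have : ({a, b, w, v} : Finset V) ∈ M.faces := by
          refine face_of_pos hfK (by simp) ?_
          intro x hx
          simp only [mem_insert, mem_singleton] at hx
          rcases hx with rfl | rfl | rfl | rfl
          · exact hfa
          · exact hfb
          · exact hw
          · exact lt_of_le_of_ne (real_nonneg hfK _) (Ne.symm hne)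
        have hd := dim_le hM this
        have h4 : ({a, b, w, v} : Finset V).card = 4 := by
          rw [card_insert_of_notMem (by simp [hab, hwa.symm, hva.symm]),
            card_insert_of_notMem (by simp [hwb.symm, hvb.symm]), card_pair hvw.symm]
        omega
      rw [Finset.sum_eq_single_of_mem w (by simp [hwa, hwb]) (fun v hv hvw => by
        simp only [mem_erase, mem_univ, and_true] at hv
        exact hz v hv.2 hv.1 hvw)] at hsum
      linarith
    · have hw0 : f w = 0 := le_antisymm (not_lt.mp hw) (real_nonneg hfK w)
      have hs0 : ∑ v ∈ (univ.erase a).erase b, f v = 0 := by linarith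
      rw [Finset.sum_eq_zero_iff_of_nonneg (fun v _ => real_nonneg hfK v)] at hs0
      apply hf.2
      show f = p
      funext v
      by_cases hva : v = a
      · subst hva; simp [hp]; linarith
      · by_cases hvb : v = b
        · subst hvb; simp [hp, hva]; linarith
        · simp only [hp, hva, hvb, if_false]
          exact hs0 v (by simp [hva, hvb])
  obtain ⟨m, n, hmn, L, hL, hE⟩ := hR (G w1) (G w2) (hG _).continuousOn (hG0 _ h1a h1b)
    (hG _).continuousOn (hG0 _ h2a h2b)
  obtain ⟨ε, hε, hball⟩ := Metric.mem_nhdsWithin_iff.mp hW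
  obtain ⟨r, hr0, hr1, hr2⟩ : ∃ r : ℝ, 0 < r ∧ r ≤ 1 / 2 ∧ r < ε :=
    ⟨min (1 / 2) (ε / 2), by positivity, min_le_left _ _,
      lt_of_le_of_lt (min_le_right _ _) (by linarith)⟩
  have cW : ∀ w θ, w ≠ a → w ≠ b → {a, b, w} ∈ M.faces → θ ∈ Set.Icc 0 Real.pi →
      c r w θ ∈ W \ {p} := by
    intro w θ hwa hwb hw hθ
    have hs1 := Real.sin_nonneg_of_mem_Icc hθ
    have hs2 := Real.sin_le_one θ
    have hs3 := Real.cos_le_one θ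
    have hs4 := Real.neg_one_le_cos θ
    refine ⟨hball ⟨?_, cK r w θ hr0.le hr1 hwa hwb hw hθ⟩, ?_⟩
    · rw [Metric.mem_ball]
      refine lt_of_le_of_lt ((dist_pi_le_iff hr0.le).mpr fun v => ?_) hr2
      rw [Real.dist_eq, abs_le]
      simp only [hc, hp]
      split_ifs
      · constructor <;> nlinarith
      · constructor <;> nlinarith
      · constructor <;> nlinarith
      · constructor <;> linarith
    · intro heq
      have heq : c r w θ = p := heq
      have e1 := congrFun heq a
      have e2 := congrFun heq b
      rw [ca] at e1
      rw [cb] at e2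
      simp only [hp, if_true, hab.symm, if_false] at e1 e2
      have e3 : r * Real.sin θ = 0 := by linarith
      have e4 : r * Real.cos θ = 0 := by linarith
      have e5 : Real.sin θ = 0 := by simpa [hr0.ne'] using e3
      have e6 : Real.cos θ = 0 := by simpa [hr0.ne'] using e4
      have := Real.sin_sq_add_cos_sq θ
      rw [e5, e6] at this
      norm_num at this
  have Gpos : ∀ w θ, w ≠ a → w ≠ b →
      G w (c r w θ) = r * Complex.exp (((1 : ℤ) : ℂ) * θ * Complex.I) := by
    intro w θ hwa hwb
    have : c r w θ w = r * Real.sin θ := by simp [hc, hwa, hwb]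
    simp only [G, this, ca, cb]
    rw [Int.cast_one, one_mul, Complex.exp_mul_I]
    push_cast
    ring
  have Gneg : ∀ w w' θ, w ≠ a → w ≠ b → w ≠ w' →
      G w (c r w' θ) = r * Complex.exp (((-1 : ℤ) : ℂ) * θ * Complex.I) := by
    intro w w' θ hwa hwb hww
    have : c r w' θ w = 0 := by simp [hc, hwa, hwb, hww]
    simp only [G, this, ca, cb]
    rw [Complex.exp_mul_I]
    push_cast
    rw [show (-1 : ℂ) * θ = -θ by ring, Complex.cos_neg, Complex.sin_neg]
    ring
  have key : ∀ w (s t : ℤ), w ≠ a → w ≠ b → {a, b, w} ∈ M.faces →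
      (∀ θ : ℝ, G w1 (c r w θ) = r * Complex.exp ((s : ℂ) * θ * Complex.I)) →
      (∀ θ : ℝ, G w2 (c r w θ) = r * Complex.exp ((t : ℂ) * θ * Complex.I)) →
      L (c r w Real.pi) - L (c r w 0) = (m * s + n * t) * (Real.pi * Complex.I) := by
    intro w s t hwa hwb hw hs ht
    have hcc : Continuous (c r w) := by
      refine continuous_pi fun v => ?_
      simp only [hc]
      split_ifs <;> fun_prop
    obtain ⟨k, hk⟩ := log_const (S := Set.Icc 0 Real.pi) (F := fun θ : ℝ =>
        L (c r w θ) - ((m * s + n * t) * (θ * Complex.I) + (m + n) * Complex.log r))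
      isPreconnected_Icc
      (by
        refine ContinuousOn.sub (hL.comp hcc.continuousOn fun θ hθ => cW w θ hwa hwb hw hθ) ?_
        exact Continuous.continuousOn (by fun_prop))
      (by
        intro θ hθ
        have hr' : (r : ℂ) ≠ 0 := by exact_mod_cast hr0.ne'
        rw [Complex.exp_sub, hE _ (cW w θ hwa hwb hw hθ), hs, ht,
          div_eq_one_iff_eq (Complex.exp_ne_zero _)]
        rw [mul_zpow, mul_zpow, ← Complex.exp_int_mul, ← Complex.exp_int_mul]
        conv_lhs => rw [← Complex.exp_log hr']
        rw [← Complex.exp_int_mul, ← Complex.exp_int_mul, ← Complex.exp_add, ← Complex.exp_add,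
          ← Complex.exp_add]
        congr 1
        ring)
    have e1 := hk 0 ⟨le_rfl, Real.pi_pos.le⟩
    have e2 := hk Real.pi ⟨Real.pi_pos.le, le_rfl⟩
    have := e2.trans e1.symm
    simp only [Complex.ofReal_zero, zero_mul, mul_zero, zero_add] at this
    linear_combination this
  have hend0 : ∀ w w', c r w 0 = c r w' 0 := by
    intro w w'; funext v; simp [hc]
  have hendpi : ∀ w w', c r w Real.pi = c r w' Real.pi := by
    intro w w'; funext v; simp [hc]
  have k1 := key w1 1 (-1) h1a h1b h1 (fun θ => Gpos w1 θ h1a h1b)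
    (fun θ => Gneg w2 w1 θ h2a h2b h12.symm)
  have k2 := key w2 (-1) 1 h2a h2b h2 (fun θ => Gneg w1 w2 θ h1a h1b h12)
    (fun θ => Gpos w2 θ h2a h2b)
  have k3 := key w3 (-1) (-1) h3a h3b h3 (fun θ => Gneg w1 w3 θ h1a h1b h13)
    (fun θ => Gneg w2 w3 θ h2a h2b h23)
  rw [hend0 w2 w1, hendpi w2 w1, k1] at k2
  rw [hend0 w3 w1, hendpi w3 w1, k1] at k3
  have hpi : (Real.pi * Complex.I : ℂ) ≠ 0 := by simp [Real.pi_ne_zero]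
  have k2' := mul_right_cancel₀ hpi k2
  have k3' := mul_right_cancel₀ hpi k3
  have k2z : m * 1 + n * (-1) = m * (-1) + n * 1 := by exact_mod_cast k2'
  have k3z : m * 1 + n * (-1) = m * (-1) + n * (-1) := by exact_mod_cast k3'
  omega

end SComplex

open Finset
open scoped Topology

namespace SComplex
variable {V : Type} [DecidableEq V] [Fintype V] {M : SComplex V}

/-- the closed cell of a face -/
def cell (σ : Finset V) : Set (V → ℝ) :=
  {f | (∀ v, v ∉ σ → f v = 0) ∧ (∀ v, 0 ≤ f v) ∧ (∑ v, f v) = 1}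

theorem isClosed_cell (σ : Finset V) : IsClosed (cell σ) := by
  have : cell σ = (⋂ v, ⋂ (_ : v ∉ σ), {f : V → ℝ | f v = 0}) ∩ ((⋂ v, {f : V → ℝ | 0 ≤ f v}) ∩
      {f | ∑ v, f v = 1}) := by
    ext f; simp [cell]
  rw [this]
  refine IsClosed.inter ?_ (IsClosed.inter ?_ ?_)
  · exact isClosed_iInter fun v => isClosed_iInter fun _ =>
      isClosed_eq (continuous_apply v) continuous_const
  · exact isClosed_iInter fun v => isClosed_le continuous_const (continuous_apply v)
  · exact isClosed_eq (by fun_prop) continuous_const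

theorem realization_eq : M.realization = ⋃ σ : {σ // σ ∈ M.faces}, cell σ.1 := by
  ext f
  simp only [realization, cell, Set.mem_iUnion, Subtype.exists, exists_prop]
  rfl

theorem continuousOn_real {Y : Type*} [TopologicalSpace Y] {F : (V → ℝ) → Y}
    (h : ∀ σ ∈ M.faces, ContinuousOn F (cell σ)) : ContinuousOn F M.realization := by
  rw [realization_eq]
  exact (locallyFinite_of_finite _).continuousOn_iUnion (fun σ => isClosed_cell _)
    (fun σ => h σ.1 σ.2)

noncomputable def circ (l : Finset V → V → ℤ) (f : V → ℝ) : ℂ :=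
  Complex.exp (2 * Real.pi * Complex.I * ((∑ v, f v * l (univ.filter fun v => 0 < f v) v : ℝ) : ℂ))

theorem circ_cell {c : V → V → ℤ} {l : Finset V → V → ℤ}
    (h : ∀ σ ∈ M.faces, ∀ x ∈ σ, ∀ y ∈ σ, c x y = l σ x - l σ y) {σ : Finset V} (hσ : σ ∈ M.faces)
    {f : V → ℝ} (hf : f ∈ cell σ) :
    circ l f = Complex.exp (2 * Real.pi * Complex.I * ((∑ v, f v * l σ v : ℝ) : ℂ)) := by
  set s := univ.filter fun v => 0 < f v with hs
  have hfK : f ∈ M.realization := ⟨σ, hσ, hf⟩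
  obtain ⟨x, hx⟩ := exists_pos hfK
  have hsf : s ∈ M.faces := face_of_pos hfK ⟨x, by simp [hs, hx]⟩ (fun v hv => by simpa [hs] using hv)
  have hsσ : s ⊆ σ := by
    intro v hv
    by_contra hvσ
    have := hf.1 v hvσ
    simp [hs, this] at hv
  have hxs : x ∈ s := by simp [hs, hx]
  have hk : ∑ v, f v * l σ v = ∑ v, f v * l s v + ((l σ x - l s x : ℤ) : ℝ) := by
    have : ∀ v, f v * l σ v = f v * l s v + f v * ((l σ x - l s x : ℤ) : ℝ) := by
      intro v
      by_cases hv : 0 < f v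
      · have hvs : v ∈ s := by simp [hs, hv]
        have h1 := h σ hσ v (hsσ hvs) x (hsσ hxs)
        have h2 := h s hsf v hvs x hxs
        have h3 : l σ v = l s v + (l σ x - l s x) := by omega
        rw [h3]; push_cast; ring
      · have : f v = 0 := le_antisymm (not_lt.mp hv) (hf.2.1 v)
        simp [this]
    rw [Finset.sum_congr rfl fun v _ => this v, Finset.sum_add_distrib, ← Finset.sum_mul, hf.2.2,
      one_mul]
  rw [hk, circ, ← hs]
  rw [Complex.exp_eq_exp_iff_exists_int]
  refine ⟨-(l σ x - l s x), ?_⟩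
  push_cast
  ring

theorem circ_cont {c : V → V → ℤ} {l : Finset V → V → ℤ}
    (h : ∀ σ ∈ M.faces, ∀ x ∈ σ, ∀ y ∈ σ, c x y = l σ x - l σ y) :
    ContinuousOn (circ l) M.realization := by
  refine continuousOn_real fun σ hσ => ?_
  refine ContinuousOn.congr (f := fun f : V → ℝ =>
    Complex.exp (2 * Real.pi * Complex.I * ((∑ v, f v * l σ v : ℝ) : ℂ))) ?_
    (fun f hf => circ_cell h hσ hf)
  exact Continuous.continuousOn (by fun_prop)

theorem cocycle (hM : M.IsMobius) {c c' : V → V → ℤ} {l l' : Finset V → V → ℤ}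
    (h : ∀ σ ∈ M.faces, ∀ x ∈ σ, ∀ y ∈ σ, c x y = l σ x - l σ y)
    (h' : ∀ σ ∈ M.faces, ∀ x ∈ σ, ∀ y ∈ σ, c' x y = l' σ x - l' σ y) :
    ∃ m n : ℤ, (m ≠ 0 ∨ n ≠ 0) ∧ ∃ φ : V → ℤ, ∀ x y, {x, y} ∈ M.faces →
      φ x - φ y = m * c x y + n * c' x y := by
  obtain ⟨m, n, hmn, L, hL, hE⟩ := real_rankOne hM (circ l) (circ l') (circ_cont h)
    (fun f _ => Complex.exp_ne_zero _) (circ_cont h') (fun f _ => Complex.exp_ne_zero _)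
  have hseg : ∀ x y, {x, y} ∈ M.faces → ∃ k : ℤ, ∀ t ∈ Set.Icc (0 : ℝ) 1,
      L ((1 - t) • (Pi.single x 1 : V → ℝ) + t • (Pi.single y 1 : V → ℝ)) =
        2 * Real.pi * Complex.I * (m * ((1 - t) * l {x, y} x + t * l {x, y} y) +
        n * ((1 - t) * l' {x, y} x + t * l' {x, y} y)) + k * (2 * Real.pi * Complex.I) := by
    intro x y hxy
    have hmem : ∀ t ∈ Set.Icc (0 : ℝ) 1,
      (1 - t) • (Pi.single x 1 : V → ℝ) + t • (Pi.single y 1 : V → ℝ) ∈ cell {x, y} := by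
      intro t ht
      obtain ⟨h1, h2⟩ := ht
      refine ⟨?_, ?_, ?_⟩
      · intro v hv
        simp only [mem_insert, mem_singleton, not_or] at hv
        simp [hv.1, hv.2]
      · intro v
        simp only [Pi.add_apply, Pi.smul_apply, Pi.single_apply, smul_eq_mul]
        split_ifs <;> linarith
      · simp [Finset.sum_add_distrib, Pi.single_apply]
    have hmemK : ∀ t ∈ Set.Icc (0 : ℝ) 1,
      (1 - t) • (Pi.single x 1 : V → ℝ) + t • (Pi.single y 1 : V → ℝ) ∈ M.realization :=
      fun t ht => ⟨_, hxy, hmem t ht⟩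
    have hval : ∀ (l : Finset V → V → ℤ) (t : ℝ),
        ((∑ v, ((1 - t) • (Pi.single x 1 : V → ℝ) + t • (Pi.single y 1 : V → ℝ)) v * l {x, y} v : ℝ) : ℂ)
        = (1 - t) * l {x, y} x + t * l {x, y} y := by
      intro l t
      have : (∑ v, ((1 - t) • (Pi.single x 1 : V → ℝ) + t • (Pi.single y 1 : V → ℝ)) v * l {x, y} v : ℝ)
        = (1 - t) * l {x, y} x + t * l {x, y} y := by
        simp [add_mul, Finset.sum_add_distrib, Pi.single_apply]
      rw [this]; push_cast; ring
    obtain ⟨k, hk⟩ := log_const (S := Set.Icc (0 : ℝ) 1) (F := fun t : ℝ =>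
      L ((1 - t) • (Pi.single x 1 : V → ℝ) + t • (Pi.single y 1 : V → ℝ)) -
        2 * Real.pi * Complex.I * (m * ((1 - t) * l {x, y} x + t * l {x, y} y) +
        n * ((1 - t) * l' {x, y} x + t * l' {x, y} y))) isPreconnected_Icc
      (by
        refine ContinuousOn.sub (hL.comp (f := fun t : ℝ => (1 - t) • (Pi.single x 1 : V → ℝ) +
          t • (Pi.single y 1 : V → ℝ)) ?_ hmemK) ?_
        · exact Continuous.continuousOn (by fun_prop)
        · exact Continuous.continuousOn (by fun_prop))
      (by
        intro t ht
        rw [Complex.exp_sub, hE _ (hmemK t ht), div_eq_one_iff_eq (Complex.exp_ne_zero _),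
          circ_cell h hxy (hmem t ht), circ_cell h' hxy (hmem t ht), hval, hval,
          ← Complex.exp_int_mul, ← Complex.exp_int_mul, ← Complex.exp_add]
        congr 1
        ring)
    exact ⟨k, fun t ht => by linear_combination hk t ht⟩
  have hφ : ∀ x, ∃ k : ℤ, {x} ∈ M.faces → L (Pi.single x 1) = k * (2 * Real.pi * Complex.I) := by
    intro x
    by_cases hx : {x} ∈ M.faces
    · obtain ⟨k, hk⟩ := hseg x x (by simpa using hx)
      have := hk 0 ⟨le_rfl, zero_le_one⟩
      refine ⟨m * l {x, x} x + n * l' {x, x} x + k, fun _ => ?_⟩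
      simp only [sub_zero, one_smul, zero_smul, add_zero, Complex.ofReal_zero, one_mul, zero_mul] at this
      rw [this]; push_cast; ring
    · exact ⟨0, fun h => absurd h hx⟩
  choose φ hφ using hφ
  refine ⟨m, n, hmn, φ, fun x y hxy => ?_⟩
  obtain ⟨k, hk⟩ := hseg x y hxy
  have e0 := hk 0 ⟨le_rfl, zero_le_one⟩
  have e1 := hk 1 ⟨zero_le_one, le_rfl⟩
  simp only [sub_zero, one_smul, zero_smul, add_zero, zero_add, sub_self, Complex.ofReal_zero,
    Complex.ofReal_one, one_mul, zero_mul] at e0 e1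
  rw [hφ x (vert_of_edge hxy).1] at e0
  rw [hφ y (vert_of_edge hxy).2] at e1
  rw [h _ hxy x (by simp) y (by simp), h' _ hxy x (by simp) y (by simp)]
  have hpi : (2 * Real.pi * Complex.I : ℂ) ≠ 0 := by simp [Real.pi_ne_zero]
  have : ((φ x - φ y : ℤ) : ℂ) = ((m * (l {x, y} x - l {x, y} y) +
      n * (l' {x, y} x - l' {x, y} y) : ℤ) : ℂ) := by
    apply mul_right_cancel₀ hpi
    push_cast
    linear_combination e0 - e1
  exact_mod_cast this

end SComplex

open Finset
open scoped Topology

namespace SComplex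
variable {V : Type} [DecidableEq V] [Fintype V] {M : SComplex V}

/-- remove a vertex -/
def del (M : SComplex V) (w : V) : SComplex V where
  faces := M.faces.filter fun σ => w ∉ σ
  nonempty_of_mem σ hσ := M.nonempty_of_mem σ (mem_filter.mp hσ).1
  down_closed := by
    intro σ hσ τ hτ hne
    rw [mem_filter] at hσ ⊢
    exact ⟨M.down_closed σ hσ.1 τ hτ hne, fun h => hσ.2 (hτ h)⟩

def shift (u v w d : V) (f : V → ℝ) (W D s : ℝ) : V → ℝ := fun x =>
  if x = w then W else if x = d then D else if x = u then f x + s else if x = v then f x + s else f x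

theorem ear_mobius (hM : M.IsMobius) {u v w d : V} (huv : u ≠ v) (huw : u ≠ w) (hud : u ≠ d)
    (hvw : v ≠ w) (hvd : v ≠ d) (hwd : w ≠ d) (hT : {u, v, w} ∈ M.faces) (hT' : {u, v, d} ∈ M.faces)
    (hw : ∀ σ ∈ M.faces, w ∈ σ → σ ⊆ {u, v, w})
    (hE : ∀ σ ∈ M.faces, u ∈ σ → v ∈ σ → σ ⊆ {u, v, w} ∨ σ ⊆ {u, v, d}) : (M.del w).IsMobius := by
  have sw : ∀ f W D s, shift u v w d f W D s w = W := by simp [shift]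
  have sd : ∀ f W D s, shift u v w d f W D s d = D := by simp [shift, hwd.symm]
  have su : ∀ f W D s, shift u v w d f W D s u = f u + s := by simp [shift, huw, hud]
  have sv : ∀ f W D s, shift u v w d f W D s v = f v + s := by simp [shift, hvw, hvd]
  have sx : ∀ f W D s x, x ≠ u → x ≠ v → x ≠ w → x ≠ d → shift u v w d f W D s x = f x := by
    intro f W D s x h1 h2 h3 h4; simp [shift, h1, h2, h3, h4]
  have ssum : ∀ f W D s, ∑ x, shift u v w d f W D s x = ∑ x, f x + (W - f w) + (D - f d) + 2 * s := by
    intro f W D s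
    have : ∀ x, shift u v w d f W D s x = f x + (if x = w then W - f w else 0) +
        (if x = d then D - f d else 0) + (if x = u then s else 0) + (if x = v then s else 0) := by
      intro x
      by_cases h1 : x = w
      · subst h1; simp [sw, hwd, huw.symm, hvw.symm]
      by_cases h2 : x = d
      · subst h2; simp [sd, hwd.symm, hud.symm, hvd.symm]
      by_cases h3 : x = u
      · subst h3; simp [su, h1, h2, huv]
      by_cases h4 : x = v
      · subst h4; simp [sv, h1, h2, huv.symm]
      simp [sx f W D s x h3 h4 h1 h2, h1, h2, h3, h4]
    rw [Finset.sum_congr rfl fun x _ => this x]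
    simp only [Finset.sum_add_distrib, Finset.sum_ite_eq', mem_univ, if_true]
    ring
  have scont : ∀ F W D s : (V → ℝ) → ℝ, Continuous W → Continuous D → Continuous s →
      Continuous fun f => shift u v w d f (W f) (D f) (s f) := by
    intro F W D s h1 h2 h3
    refine continuous_pi fun x => ?_
    simp only [shift]
    split_ifs <;> fun_prop
  have sss : ∀ f W D s W' D' s', shift u v w d (shift u v w d f W D s) W' D' s' =
      shift u v w d f W' D' (s + s') := by
    intro f W D s W' D' s'
    funext x
    by_cases h1 : x = w
    · subst h1; simp [sw]
    by_cases h2 : x = d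
    · subst h2; simp [sd]
    by_cases h3 : x = u
    · subst h3; simp [su, add_assoc]
    by_cases h4 : x = v
    · subst h4; simp [sv, add_assoc]
    rw [sx _ _ _ _ x h3 h4 h1 h2, sx _ _ _ _ x h3 h4 h1 h2, sx _ _ _ _ x h3 h4 h1 h2]
  have sid : ∀ f, shift u v w d f (f w) (f d) 0 = f := by
    intro f
    funext x
    simp only [shift]
    split_ifs <;> simp_all
  let P : (V → ℝ) → V → ℝ := fun f =>
    shift u v w d f 0 (f d + min (f u) (f v)) ((f w - min (f u) (f v)) / 2)
  let Q : (V → ℝ) → V → ℝ := fun f =>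
    shift u v w d f (max 0 (2 * min (f u) (f v) - f d)) (max 0 (f d - 2 * min (f u) (f v)))
      (-((max 0 (2 * min (f u) (f v) - f d) - min (f d) (2 * min (f u) (f v))) / 2))
  have hPc : Continuous P := scont (fun f => f w) _ _ _ (by fun_prop) (by fun_prop) (by fun_prop)
  have hQc : Continuous Q := scont (fun f => f w) _ _ _ (by fun_prop) (by fun_prop) (by fun_prop)
  -- facts on supports
  have hwpos : ∀ f ∈ M.realization, 0 < f w → ∀ x, x ≠ u → x ≠ v → x ≠ w → f x = 0 := by
    rintro f ⟨σ, hσ, h0, h1, h2⟩ hpos x hxu hxv hxw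
    have hwσ : w ∈ σ := by
      by_contra h; rw [h0 w h] at hpos; exact lt_irrefl _ hpos
    exact h0 x fun h => by
      have := hw σ hσ hwσ h
      simp [hxu, hxv, hxw] at this
  have huvpos : ∀ f ∈ M.realization, 0 < min (f u) (f v) →
      ∀ x, x ≠ u → x ≠ v → x ≠ w → x ≠ d → f x = 0 := by
    rintro f ⟨σ, hσ, h0, h1, h2⟩ hpos x hxu hxv hxw hxd
    obtain ⟨hpu, hpv⟩ := lt_min_iff.mp hpos
    have huσ : u ∈ σ := by
      by_contra h; rw [h0 u h] at hpu; exact lt_irrefl _ hpu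
    have hvσ : v ∈ σ := by
      by_contra h; rw [h0 v h] at hpv; exact lt_irrefl _ hpv
    refine h0 x fun h => ?_
    rcases hE σ hσ huσ hvσ with h' | h'
    · have := h' h
      simp [hxu, hxv, hxw] at this
    · have := h' h
      simp [hxu, hxv, hxd] at this
  have hdel : ∀ f, f ∈ (M.del w).realization ↔ f ∈ M.realization ∧ f w = 0 := by
    intro f
    constructor
    · rintro ⟨σ, hσ, h0, h1, h2⟩
      obtain ⟨hσ, hwσ⟩ := mem_filter.mp hσ
      exact ⟨⟨σ, hσ, h0, h1, h2⟩, h0 w hwσ⟩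
    · rintro ⟨hf, hfw⟩
      have hf' := hf
      obtain ⟨σ, hσ, h0, h1, h2⟩ := hf
      obtain ⟨x, hx⟩ := exists_pos hf'
      refine ⟨σ.erase w, mem_filter.mpr ⟨M.down_closed σ hσ _ (erase_subset _ _) ⟨x, ?_⟩, by simp⟩,
        ?_, h1, h2⟩
      · refine mem_erase.mpr ⟨fun h => ?_, ?_⟩
        · rw [h, hfw] at hx; exact lt_irrefl _ hx
        · by_contra h; rw [h0 x h] at hx; exact lt_irrefl _ hx
      · intro y hy
        by_cases hyw : y = w
        · rw [hyw, hfw]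
        · exact h0 y fun h => hy (mem_erase.mpr ⟨hyw, h⟩)
  have hPm : ∀ f ∈ M.realization, P f ∈ (M.del w).realization := by
    intro f hf
    rw [hdel]
    refine ⟨?_, sw _ _ _ _⟩
    have nn := real_nonneg hf
    have hm0 : 0 ≤ min (f u) (f v) := le_min (nn u) (nn v)
    by_cases hcase : min (f u) (f v) = 0 ∧ f w = 0
    · have : P f = f := by
        show shift u v w d f _ _ _ = f
        conv_rhs => rw [← sid f]
        rw [hcase.1, hcase.2]; simp
      rwa [this]
    · refine ⟨{u, v, d}, hT', ?_, ?_, ?_⟩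
      · intro x hx
        simp only [mem_insert, mem_singleton, not_or] at hx
        by_cases hxw : x = w
        · subst hxw; exact sw _ _ _ _
        show shift u v w d f _ _ _ x = 0
        rw [sx _ _ _ _ x hx.1 hx.2.1 hxw hx.2.2]
        by_cases hm : 0 < min (f u) (f v)
        · exact huvpos f hf hm x hx.1 hx.2.1 hxw hx.2.2
        · have hm' : min (f u) (f v) = 0 := le_antisymm (not_lt.mp hm) hm0
          have : 0 < f w := lt_of_le_of_ne (nn w) fun h => hcase ⟨hm', h.symm⟩
          exact hwpos f hf this x hx.1 hx.2.1 hxw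
      · intro x
        show 0 ≤ shift u v w d f _ _ _ x
        have h1 := min_le_left (f u) (f v)
        have h2 := min_le_right (f u) (f v)
        have := nn u
        have := nn v
        have := nn w
        have := nn d
        have := nn x
        by_cases e1 : x = w
        · subst e1; rw [sw]
        by_cases e2 : x = d
        · subst e2; rw [sd]; linarith
        by_cases e3 : x = u
        · subst e3; rw [su]; linarith
        by_cases e4 : x = v
        · subst e4; rw [sv]; linarith
        rwa [sx _ _ _ _ x e3 e4 e1 e2]
      · show ∑ x, shift u v w d f _ _ _ x = 1
        rw [ssum, real_sum hf]; ring
  have maxmin : ∀ a b : ℝ, (max 0 (a - b) = 0 ∧ max 0 (b - a) = b - a ∧ min b a = a ∧ a ≤ b) ∨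
      (max 0 (a - b) = a - b ∧ max 0 (b - a) = 0 ∧ min b a = b ∧ b ≤ a) := by
    intro a b
    rcases le_total a b with h | h
    · left
      exact ⟨max_eq_left (by linarith), max_eq_right (by linarith), min_eq_right h, h⟩
    · right
      exact ⟨max_eq_right (by linarith), max_eq_left (by linarith), min_eq_left h, h⟩
  have hQm : ∀ f ∈ (M.del w).realization, Q f ∈ M.realization := by
    intro f hf
    obtain ⟨hf, hfw⟩ := (hdel f).mp hf
    have nn := real_nonneg hf
    have hm0 : 0 ≤ min (f u) (f v) := le_min (nn u) (nn v)
    have h1 := min_le_left (f u) (f v)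
    have h2 := min_le_right (f u) (f v)
    have n1 := nn u
    have n2 := nn v
    have n4 := nn d
    have hsum : ∑ x, Q f x = 1 := by
      show ∑ x, shift u v w d f _ _ _ x = 1
      rw [ssum, real_sum hf, hfw]
      rcases maxmin (2 * min (f u) (f v)) (f d) with ⟨a, b, c, _⟩ | ⟨a, b, c, _⟩ <;> rw [a, b, c] <;> ring
    have hnn : ∀ x, 0 ≤ Q f x := by
      intro x
      show 0 ≤ shift u v w d f _ _ _ x
      have n5 := nn x
      rcases maxmin (2 * min (f u) (f v)) (f d) with ⟨a, b, c, hle⟩ | ⟨a, b, c, hle⟩ <;> rw [a, b, c]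
      all_goals
        by_cases e1 : x = w
        · subst e1; rw [sw] <;> linarith
        by_cases e2 : x = d
        · subst e2; rw [sd] <;> linarith
        by_cases e3 : x = u
        · subst e3; rw [su]; linarith
        by_cases e4 : x = v
        · subst e4; rw [sv]; linarith
        rwa [sx _ _ _ _ x e3 e4 e1 e2]
    rcases hm0.eq_or_lt with hm | hm
    · have : Q f = f := by
        show shift u v w d f _ _ _ = f
        conv_rhs => rw [← sid f]
        rw [← hm, hfw]
        simp [n4]
      rwa [this]
    · have hz := huvpos f hf hm
      rcases maxmin (2 * min (f u) (f v)) (f d) with ⟨a, b, c, hle⟩ | ⟨a, b, c, hle⟩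
      · refine ⟨{u, v, d}, hT', ?_, hnn, hsum⟩
        intro x hx
        simp only [mem_insert, mem_singleton, not_or] at hx
        show shift u v w d f _ _ _ x = 0
        by_cases hxw : x = w
        · subst hxw; rw [sw, a]
        rw [sx _ _ _ _ x hx.1 hx.2.1 hxw hx.2.2]
        exact hz x hx.1 hx.2.1 hxw hx.2.2
      · refine ⟨{u, v, w}, hT, ?_, hnn, hsum⟩
        intro x hx
        simp only [mem_insert, mem_singleton, not_or] at hx
        show shift u v w d f _ _ _ x = 0
        by_cases hxd : x = d
        · subst hxd; rw [sd, b]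
        rw [sx _ _ _ _ x hx.1 hx.2.1 hx.2.2 hxd]
        exact hz x hx.1 hx.2.1 hx.2.2 hxd
  have hQP : ∀ f ∈ M.realization, Q (P f) = f := by
    intro f hf
    have nn := real_nonneg hf
    have hm0 : 0 ≤ min (f u) (f v) := le_min (nn u) (nn v)
    have hwd0 : f w = 0 ∨ f d = 0 := by
      rcases (nn w).eq_or_lt with h | h
      · exact Or.inl h.symm
      · exact Or.inr (hwpos f hf h d hud.symm hvd.symm hwd.symm)
    have pu : P f u = f u + (f w - min (f u) (f v)) / 2 := su _ _ _ _
    have pv : P f v = f v + (f w - min (f u) (f v)) / 2 := sv _ _ _ _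
    have pd : P f d = f d + min (f u) (f v) := sd _ _ _ _
    show shift u v w d (P f) _ _ _ = f
    rw [show P f = shift u v w d f 0 (f d + min (f u) (f v)) ((f w - min (f u) (f v)) / 2) from rfl, sss,
      ← show P f = shift u v w d f 0 (f d + min (f u) (f v)) ((f w - min (f u) (f v)) / 2) from rfl]
    conv_rhs => rw [← sid f]
    rw [pu, pv, pd, min_add_add_right]
    have n3 := nn w
    have n4 := nn d
    generalize min (f u) (f v) = m at *
    rcases hwd0 with h0 | h0
    · have e1 : max 0 (2 * (m + (f w - m) / 2) - (f d + m)) = 0 := max_eq_left (by linarith)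
      have e2 : max 0 ((f d + m) - 2 * (m + (f w - m) / 2)) = f d := by
        rw [max_eq_right (by linarith)]; linarith
      have e3 : min (f d + m) (2 * (m + (f w - m) / 2)) = m := by
        rw [min_eq_right (by linarith)]; linarith
      rw [e1, e2, e3, h0]
      congr 1; ring
    · have e1 : max 0 (2 * (m + (f w - m) / 2) - (f d + m)) = f w := by
        rw [max_eq_right (by linarith)]; linarith
      have e2 : max 0 ((f d + m) - 2 * (m + (f w - m) / 2)) = f d := by
        rw [max_eq_left (by linarith)]; linarith
      have e3 : min (f d + m) (2 * (m + (f w - m) / 2)) = m := by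
        rw [min_eq_left (by linarith)]; linarith
      rw [e1, e2, e3]
      congr 1; ring
  have hPQ : ∀ f ∈ (M.del w).realization, P (Q f) = f := by
    intro f hf
    obtain ⟨hf, hfw⟩ := (hdel f).mp hf
    set W := max 0 (2 * min (f u) (f v) - f d) with hW
    set D := max 0 (f d - 2 * min (f u) (f v)) with hD
    set s := -((W - min (f d) (2 * min (f u) (f v))) / 2) with hs
    have hQf : Q f = shift u v w d f W D s := rfl
    show shift u v w d (Q f) _ _ _ = f
    rw [hQf, sss, su, sv, sd, sw, min_add_add_right]
    conv_rhs => rw [← sid f]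
    rw [hfw]
    rcases maxmin (2 * min (f u) (f v)) (f d) with ⟨a, b, c, hle⟩ | ⟨a, b, c, hle⟩
    · rw [← hW] at a
      rw [← hD] at b
      rw [c] at hs
      congr 1
      · rw [b, hs, a]; ring
      · rw [hs, a]; ring
    · rw [← hW] at a
      rw [← hD] at b
      rw [c] at hs
      congr 1
      · rw [b, hs, a]; ring
      · rw [hs, a]; ring
  obtain ⟨φ⟩ := hM
  let ψ : (M.del w).realization ≃ₜ M.realization :=
    { toFun := fun f => ⟨Q f, hQm f f.2⟩
      invFun := fun f => ⟨P f, hPm f f.2⟩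
      left_inv := fun f => Subtype.ext (hPQ f f.2)
      right_inv := fun f => Subtype.ext (hQP f f.2)
      continuous_toFun := (hQc.comp continuous_subtype_val).subtype_mk _
      continuous_invFun := (hPc.comp continuous_subtype_val).subtype_mk _ }
  exact ⟨ψ.trans φ⟩

end SComplex

open Finset
open scoped Topology

namespace SComplex
variable {V : Type} [DecidableEq V] [Fintype V] {M : SComplex V}

theorem mem_vertices {x : V} : x ∈ M.vertices ↔ {x} ∈ M.faces := by
  simp only [vertices, Finset.mem_sup, id]
  constructor
  · rintro ⟨σ, hσ, hx⟩
    exact M.down_closed σ hσ _ (by simpa using hx) (by simp)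
  · intro h
    exact ⟨_, h, by simp⟩

theorem tri_form {T : Finset V} (hT : T.card = 3) {a b : V} (hab : a ≠ b) (ha : a ∈ T) (hb : b ∈ T) :
    ∃ w, w ≠ a ∧ w ≠ b ∧ T = {a, b, w} := by
  have h1 : (T.erase a).card = 2 := by rw [card_erase_of_mem ha, hT]
  have h2 : ((T.erase a).erase b).card = 1 := by
    rw [card_erase_of_mem (by simp [hb, hab.symm]), h1]
  obtain ⟨w, hw⟩ := card_eq_one.mp h2
  have hwm : w ∈ (T.erase a).erase b := by rw [hw]; simp
  simp only [mem_erase] at hwm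
  refine ⟨w, hwm.2.1, hwm.1, ?_⟩
  ext x
  have := Finset.ext_iff.mp hw x
  simp only [mem_erase, mem_singleton] at this
  simp only [mem_insert, mem_singleton]
  grind

theorem card_tri {a b w : V} (hab : a ≠ b) (hwa : w ≠ a) (hwb : w ≠ b) :
    ({a, b, w} : Finset V).card = 3 := by
  rw [card_insert_of_notMem (by simp [hab, hwa.symm]), card_pair hwb.symm]

theorem tri_form1 {T : Finset V} (hT : T.card = 3) {a : V} (ha : a ∈ T) :
    ∃ b w, a ≠ b ∧ w ≠ a ∧ w ≠ b ∧ T = {a, b, w} := by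
  obtain ⟨b, hb, hba⟩ := Finset.exists_mem_ne (by omega : 1 < T.card) a
  obtain ⟨w, h1, h2, h3⟩ := tri_form hT hba.symm ha hb
  exact ⟨b, w, hba.symm, h1, h2, h3⟩

theorem pair_face {T : Finset V} (hT : T ∈ M.faces) {a b : V} (ha : a ∈ T) (hb : b ∈ T) :
    {a, b} ∈ M.faces := by
  refine M.down_closed T hT _ ?_ (by simp)
  intro x hx
  simp only [mem_insert, mem_singleton] at hx
  rcases hx with rfl | rfl <;> assumption

theorem triple_face {T : Finset V} (hT : T ∈ M.faces) {a b c : V} (ha : a ∈ T) (hb : b ∈ T)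
    (hc : c ∈ T) : {a, b, c} ∈ M.faces := by
  refine M.down_closed T hT _ ?_ (by simp)
  intro x hx
  simp only [mem_insert, mem_singleton] at hx
  rcases hx with rfl | rfl | rfl <;> assumption

theorem edge_tri (hM : M.IsMobius) (hn : M.NoInteriorVertices) {a b : V} (hab : a ≠ b)
    (h : {a, b} ∈ M.faces) : ∃ w, w ≠ a ∧ w ≠ b ∧ {a, b, w} ∈ M.faces := by
  by_contra! hno
  obtain ⟨e, he, hae, hec, hcard⟩ := hn a (mem_vertices.mpr (vert_of_edge h).1)
  obtain ⟨y, hy, hya⟩ := Finset.exists_mem_ne (by omega : 1 < e.card) a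
  obtain ⟨T, hT⟩ := card_pos.mp (by omega : 0 <
    (M.faces.filter fun τ => τ.card = 3 ∧ e ⊆ τ).card)
  obtain ⟨hTf, hT3, heT⟩ := mem_filter.mp hT
  have hyb : y ∈ ({b} : Set V) := by
    refine link_conn hM a {b} ?_ hab.symm hya h (pair_face he hae hy) rfl
    rintro x y hxa hya hxy rfl
    by_contra hne
    exact hno y hya hne hxy
  have hyb : y = b := hyb
  subst hyb
  obtain ⟨w, h1, h2, h3⟩ := tri_form hT3 hab (heT hae) (heT hy)
  exact hno w h1 h2 (h3 ▸ hTf)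

theorem tri_unique (hM : M.IsMobius) {a b w1 w2 z : V} (hab : a ≠ b)
    (h1 : {a, b, w1} ∈ M.faces) (h2 : {a, b, w2} ∈ M.faces)
    (h1a : w1 ≠ a) (h1b : w1 ≠ b) (h2a : w2 ≠ a) (h2b : w2 ≠ b) (h12 : w1 ≠ w2)
    (hz : {a, b, z} ∈ M.faces) (hza : z ≠ a) (hzb : z ≠ b) : z = w1 ∨ z = w2 := by
  by_contra! hcon
  exact edge_two hM hab h1 h2 hz h1a h1b h2a h2b hza hzb h12 hcon.1.symm hcon.2.symm

theorem filter_eq (hM : M.IsMobius) {a b w1 w2 : V} (hab : a ≠ b)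
    (h1 : {a, b, w1} ∈ M.faces) (h2 : {a, b, w2} ∈ M.faces)
    (h1a : w1 ≠ a) (h1b : w1 ≠ b) (h2a : w2 ≠ a) (h2b : w2 ≠ b) (h12 : w1 ≠ w2) :
    (M.faces.filter fun τ => τ.card = 3 ∧ {a, b} ⊆ τ) = {{a, b, w1}, {a, b, w2}} := by
  ext τ
  simp only [mem_filter, mem_insert, mem_singleton]
  constructor
  · rintro ⟨hτ, h3, hs⟩
    obtain ⟨z, hza, hzb, rfl⟩ := tri_form h3 hab (hs (by simp)) (hs (by simp))
    rcases tri_unique hM hab h1 h2 h1a h1b h2a h2b h12 hτ hza hzb with rfl | rfl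
    · exact Or.inl rfl
    · exact Or.inr rfl
  · rintro (rfl | rfl)
    · exact ⟨h1, card_tri hab h1a h1b, by intro x; simp; tauto⟩
    · exact ⟨h2, card_tri hab h2a h2b, by intro x; simp; tauto⟩

theorem tri_ne {a b w1 w2 : V} (h1a : w1 ≠ a) (h1b : w1 ≠ b) (h12 : w1 ≠ w2) :
    ({a, b, w1} : Finset V) ≠ {a, b, w2} := by
  intro h
  have : w1 ∈ ({a, b, w2} : Finset V) := h ▸ (by simp)
  simp [h1a, h1b, h12] at this

theorem int_of_two (hM : M.IsMobius) {a b w1 w2 : V} (hab : a ≠ b)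
    (h1 : {a, b, w1} ∈ M.faces) (h2 : {a, b, w2} ∈ M.faces)
    (h1a : w1 ≠ a) (h1b : w1 ≠ b) (h2a : w2 ≠ a) (h2b : w2 ≠ b) (h12 : w1 ≠ w2) :
    M.InteriorEdge {a, b} := by
  refine ⟨pair_face h1 (by simp) (by simp), card_pair hab, ?_⟩
  rw [filter_eq hM hab h1 h2 h1a h1b h2a h2b h12, card_pair (tri_ne h1a h1b h12)]

theorem int_of_tri (hM : M.IsMobius) {a b : V} {T T' : Finset V} (hab : a ≠ b) (hT : T ∈ M.faces)
    (hT' : T' ∈ M.faces) (h3 : T.card = 3) (h3' : T'.card = 3) (ha : a ∈ T) (hb : b ∈ T)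
    (ha' : a ∈ T') (hb' : b ∈ T') (hne : T ≠ T') : M.InteriorEdge {a, b} := by
  obtain ⟨w, h1, h2, rfl⟩ := tri_form h3 hab ha hb
  obtain ⟨w', h1', h2', rfl⟩ := tri_form h3' hab ha' hb'
  exact int_of_two hM hab hT hT' h1 h2 h1' h2' (fun h => hne (by rw [h]))

theorem int_elim {e : Finset V} (h : M.InteriorEdge e) {T : Finset V} (hT : T ∈ M.faces)
    (h3 : T.card = 3) (heT : e ⊆ T) : ∃ u v w1 w2, u ≠ v ∧ w1 ≠ u ∧ w1 ≠ v ∧ w2 ≠ u ∧ w2 ≠ v ∧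
      w1 ≠ w2 ∧ e = {u, v} ∧ {u, v, w1} ∈ M.faces ∧ {u, v, w2} ∈ M.faces ∧ T = {u, v, w1} := by
  obtain ⟨-, h2, hc⟩ := h
  obtain ⟨u, v, huv, rfl⟩ := card_eq_two.mp h2
  obtain ⟨w1, h1u, h1v, rfl⟩ := tri_form h3 huv (heT (by simp)) (heT (by simp))
  obtain ⟨T', hT', hne⟩ := Finset.exists_mem_ne (by omega : 1 <
    (M.faces.filter fun τ => τ.card = 3 ∧ {u, v} ⊆ τ).card) {u, v, w1}
  obtain ⟨hTf, hT3, heT'⟩ := mem_filter.mp hT'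
  obtain ⟨w2, h2u, h2v, rfl⟩ := tri_form hT3 huv (heT' (by simp)) (heT' (by simp))
  exact ⟨u, v, w1, w2, huv, h1u, h1v, h2u, h2v, fun h => hne (by rw [h]), rfl, hT, hTf, rfl⟩

theorem int_exists {e : Finset V} (h : M.InteriorEdge e) :
    ∃ T ∈ M.faces, T.card = 3 ∧ e ⊆ T := by
  obtain ⟨-, h2, hc⟩ := h
  obtain ⟨T, hT⟩ := card_pos.mp (by omega : 0 <
    (M.faces.filter fun τ => τ.card = 3 ∧ e ⊆ τ).card)
  obtain ⟨a, b, c⟩ := mem_filter.mp hT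
  exact ⟨T, a, b, c⟩

theorem pure (hM : M.IsMobius) (hn : M.NoInteriorVertices) {σ : Finset V} (hσ : σ ∈ M.faces) :
    ∃ T ∈ M.faces, T.card = 3 ∧ σ ⊆ T := by
  have h3 := dim_le hM hσ
  have h1 := card_pos.mpr (M.nonempty_of_mem σ hσ)
  have key : ∀ σ ∈ M.faces, σ.card = 2 → ∃ T ∈ M.faces, T.card = 3 ∧ σ ⊆ T := by
    intro σ hσ h
    obtain ⟨a, b, hab, rfl⟩ := card_eq_two.mp h
    obtain ⟨w, hwa, hwb, hw⟩ := edge_tri hM hn hab hσ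
    exact ⟨_, hw, card_tri hab hwa hwb, by intro x; simp; tauto⟩
  obtain h | h | h : σ.card = 1 ∨ σ.card = 2 ∨ σ.card = 3 := by omega
  · obtain ⟨a, rfl⟩ := card_eq_one.mp h
    obtain ⟨e, he, hae, hec, -⟩ := hn a (mem_vertices.mpr hσ)
    obtain ⟨T, hT, hT3, heT⟩ := key e he hec
    exact ⟨T, hT, hT3, by simpa using heT hae⟩
  · exact key σ hσ h
  · exact ⟨σ, hσ, h, Subset.rfl⟩

theorem strong_conn (hM : M.IsMobius) (hn : M.NoInteriorVertices) (S : Set (Finset V))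
    (hSf : ∀ T ∈ S, T ∈ M.faces ∧ T.card = 3)
    (hS : ∀ T ∈ S, ∀ T' ∈ M.faces, T'.card = 3 → ∀ a b, a ≠ b → a ∈ T → b ∈ T → a ∈ T' → b ∈ T' →
      T' ∈ S) {T0 T : Finset V} (h0 : T0 ∈ S) (hT : T ∈ M.faces) (hT3 : T.card = 3) : T ∈ S := by
  have star : ∀ x, ∀ T0 ∈ S, x ∈ T0 → ∀ T ∈ M.faces, T.card = 3 → x ∈ T → T ∈ S := by
    intro x T0 h0 hx0 T hT hT3 hxT
    obtain ⟨a, b, hxa, -, -, rfl⟩ := tri_form1 (hSf T0 h0).2 hx0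
    obtain ⟨y, z, hxy, -, -, rfl⟩ := tri_form1 hT3 hxT
    have hyA : y ∈ {y | ∃ T ∈ S, x ∈ T ∧ y ∈ T} := by
      refine link_conn hM x _ ?_ hxa.symm hxy.symm (pair_face (hSf _ h0).1 hx0 (by simp))
        (pair_face hT hxT (by simp)) ⟨_, h0, hx0, by simp⟩
      rintro y z hyx hzx hxyz ⟨T1, hT1, hx1, hy1⟩
      by_cases hyz : y = z
      · subst hyz; exact ⟨T1, hT1, hx1, hy1⟩
      · exact ⟨_, hS T1 hT1 _ hxyz (card_tri hyx.symm hzx (Ne.symm hyz)) x y hyx.symm hx1 hy1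
          (by simp) (by simp), by simp, by simp⟩
    obtain ⟨T1, hT1, hx1, hy1⟩ := hyA
    exact hS T1 hT1 _ hT hT3 x y hxy hx1 hy1 (by simp) (by simp)
  obtain ⟨x0, hx0⟩ := M.nonempty_of_mem _ (hSf T0 h0).1
  obtain ⟨x, hx⟩ := M.nonempty_of_mem _ hT
  have hxB : x ∈ {x | ∃ T ∈ S, x ∈ T} := by
    refine vert_conn hM _ ?_ (vert_of_edge (pair_face (hSf T0 h0).1 hx0 hx0)).1
      (vert_of_edge (pair_face hT hx hx)).1 ⟨T0, h0, hx0⟩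
    rintro x y hxy ⟨T1, hT1, hx1⟩
    obtain ⟨T, hT, hT3, hs⟩ := pure hM hn hxy
    exact ⟨T, star x T1 hT1 hx1 T hT hT3 (hs (by simp)), hs (by simp)⟩
  obtain ⟨T1, hT1, hx1⟩ := hxB
  exact star x T1 hT1 hx1 T hT hT3 hx

theorem exists_interior (hM : M.IsMobius) (hn : M.NoInteriorVertices) : ∃ e, M.InteriorEdge e := by
  by_contra! hno
  obtain ⟨f, hf⟩ : M.realization.Nonempty := by
    obtain ⟨e, hs, ht, -, -⟩ := mobius_equiv hM
    exact ⟨e (Mob.psi (0, 0)), by rw [← ht]; exact e.mapsTo (by simp [hs])⟩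
  obtain ⟨σ, hσ, -⟩ := hf
  obtain ⟨T0, hT0, h3, -⟩ := pure hM hn hσ
  refine not_simplex hM hT0 fun σ hσ => ?_
  obtain ⟨T, hT, hT3, hs⟩ := pure hM hn hσ
  have : T ∈ ({T0} : Set (Finset V)) := by
    refine strong_conn hM hn {T0} ?_ ?_ rfl hT hT3
    · rintro T rfl; exact ⟨hT0, h3⟩
    · rintro T rfl T' hT' h3' a b hab ha hb ha' hb'
      by_contra hne
      exact hno _ (int_of_tri hM hab hT0 hT' h3 h3' ha hb ha' hb' (fun h => hne h.symm))
  have : T = T0 := this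
  exact this ▸ hs

end SComplex

open Finset
open scoped Topology

namespace SComplex
variable {V : Type} [DecidableEq V] [Fintype V] {M : SComplex V}

def linkGraph (M : SComplex V) (u : V) : SimpleGraph V where
  Adj x y := x ≠ y ∧ x ≠ u ∧ y ≠ u ∧ {u, x, y} ∈ M.faces
  symm := ⟨by
    rintro x y ⟨h1, h2, h3, h4⟩
    exact ⟨h1.symm, h3, h2, triple_face h4 (by simp) (by simp) (by simp)⟩⟩
  loopless := ⟨fun x h => h.1 rfl⟩

theorem link_side (hM : M.IsMobius) (hn : M.NoInteriorVertices) {u v w1 w2 : V} (huv : u ≠ v)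
    (h1 : {u, v, w1} ∈ M.faces) (h2 : {u, v, w2} ∈ M.faces)
    (h1u : w1 ≠ u) (h1v : w1 ≠ v) (h2u : w2 ≠ u) (h2v : w2 ≠ v) (h12 : w1 ≠ w2) :
    ∃ A : Set V, w1 ∈ A ∧ w2 ∉ A ∧ u ∉ A ∧ v ∉ A ∧
      ∀ x y, {u, x, y} ∈ M.faces → x ≠ u → x ≠ v → y ≠ u → y ≠ v → x ∈ A → y ∈ A := by
  set G := linkGraph M u with hG
  have hbr : ¬ (G.deleteEdges {s(v, w1)}).Reachable v w1 := by
    intro hr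
    have hadj : G.Adj v w1 := ⟨h1v.symm, huv.symm, h1u, h1⟩
    obtain ⟨z, p, hp, hep⟩ := SimpleGraph.adj_and_reachable_delete_edges_iff_exists_cycle.mp ⟨hadj, hr⟩
    have hvs : v ∈ p.support := p.fst_mem_support_of_mem_edges hep
    have hnb : ∀ x ∈ p.support, ∃ a b, a ≠ b ∧ a ∈ p.support ∧ b ∈ p.support ∧
        G.Adj x a ∧ G.Adj x b := by
      intro x hx
      obtain ⟨a, b, hab, hs⟩ := Set.ncard_eq_two.mp (hp.ncard_neighborSet_toSubgraph_eq_two hx)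
      have ha : a ∈ p.toSubgraph.neighborSet x := by rw [hs]; simp
      have hb : b ∈ p.toSubgraph.neighborSet x := by rw [hs]; simp
      refine ⟨a, b, hab, ?_, ?_, ?_, ?_⟩
      · exact p.mem_verts_toSubgraph.mp (p.toSubgraph.edge_vert (SimpleGraph.Subgraph.Adj.symm ha))
      · exact p.mem_verts_toSubgraph.mp (p.toSubgraph.edge_vert (SimpleGraph.Subgraph.Adj.symm hb))
      · exact SimpleGraph.Subgraph.Adj.adj_sub ha
      · exact SimpleGraph.Subgraph.Adj.adj_sub hb
    obtain ⟨e, he, hue, hec, hcard⟩ := hn u (mem_vertices.mpr (vert_of_edge (pair_face h1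
      (mem_insert_self _ _) (mem_insert_self _ _))).1)
    obtain ⟨b, hb, hbu⟩ := Finset.exists_mem_ne (by omega : 1 < e.card) u
    have heq : e = {u, b} := by
      symm
      apply Finset.eq_of_subset_of_card_le
      · intro x hx
        simp only [mem_insert, mem_singleton] at hx
        rcases hx with rfl | rfl <;> assumption
      · rw [hec, card_pair hbu.symm]
    subst heq
    have hbs : b ∈ {x | x ∈ p.support} := by
      refine link_conn hM u _ ?_ huv.symm hbu (pair_face h1 (by simp) (by simp)) he hvs
      intro x y hxu hyu hxy hx
      by_cases hne : x = y
      · exact hne ▸ hx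
      obtain ⟨a, b, hab, ha, hb, ⟨a1, a2, a3, a4⟩, ⟨b1, b2, b3, b4⟩⟩ := hnb x hx
      rcases tri_unique hM hxu.symm a4 b4 a3 a1.symm b3 b1.symm hab hxy hyu (Ne.symm hne) with rfl | rfl
      · exact ha
      · exact hb
    obtain ⟨c, d, hcd, -, -, ⟨a1, a2, a3, a4⟩, ⟨b1, b2, b3, b4⟩⟩ := hnb b hbs
    rw [filter_eq hM hbu.symm a4 b4 a3 a1.symm b3 b1.symm hcd, card_pair (tri_ne a3 a1.symm hcd)] at hcard
    omega
  refine ⟨{x | x ≠ u ∧ (G.deleteEdges {s(v, w1)}).Reachable w1 x}, ⟨h1u, SimpleGraph.Reachable.refl _⟩,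
    ?_, fun h => h.1 rfl, fun h => hbr h.2.symm, ?_⟩
  · rintro ⟨-, h⟩
    refine hbr (h.trans (SimpleGraph.Adj.reachable ?_)).symm
    rw [SimpleGraph.deleteEdges_adj]
    refine ⟨⟨h2v, h2u, huv.symm, triple_face h2 (by simp) (by simp) (by simp)⟩, ?_⟩
    simp [h2v, h12.symm]
  · rintro x y hxy hxu hxv hyu hyv ⟨-, h⟩
    refine ⟨hyu, ?_⟩
    by_cases hne : x = y
    · exact hne ▸ h
    refine h.trans (SimpleGraph.Adj.reachable ?_)
    rw [SimpleGraph.deleteEdges_adj]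
    refine ⟨⟨hne, hxu, hyu, hxy⟩, ?_⟩
    simp [hxv, hyv]

/-- the dual function of an interior edge -/
theorem side_fn (hM : M.IsMobius) (hn : M.NoInteriorVertices) {u v w1 w2 : V} (huv : u ≠ v)
    (h1 : {u, v, w1} ∈ M.faces) (h2 : {u, v, w2} ∈ M.faces)
    (h1u : w1 ≠ u) (h1v : w1 ≠ v) (h2u : w2 ≠ u) (h2v : w2 ≠ v) (h12 : w1 ≠ w2) :
    ∃ l : Finset V → V → ℤ,
      (∀ σ ∈ M.faces, ∀ x ∈ σ, ∀ y ∈ σ, l {x, y} x - l {x, y} y = l σ x - l σ y) ∧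
      (∀ σ ∈ M.faces, ∀ τ ∈ M.faces, ∀ x y, x ≠ y → x ∈ σ → x ∈ τ → y ∈ σ → y ∈ τ →
        ({x, y} : Finset V) ≠ {u, v} → l σ x = l τ x) ∧
      l {u, v, w1} u = 1 ∧ l {u, v, w2} u = 0 := by
  classical
  obtain ⟨A, A1, A2, A3, A4, A5⟩ := link_side hM hn huv h1 h2 h1u h1v h2u h2v h12
  obtain ⟨B, B1, B2, B3, B4, B5⟩ := link_side hM hn (u := v) (v := u) huv.symm
    (triple_face h1 (by simp) (by simp) (by simp) : {v, u, w1} ∈ M.faces)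
    (triple_face h2 (by simp) (by simp) (by simp)) h1v h1u h2v h2u h12
  have PA : ∀ σ ∈ M.faces, u ∈ σ → ∀ y ∈ σ, y ≠ u → y ≠ v → ((∃ z ∈ σ, z ∈ A) ↔ y ∈ A) := by
    intro σ hσ hu y hy hyu hyv
    constructor
    · rintro ⟨z, hz, hzA⟩
      exact A5 z y (triple_face hσ hu hz hy) (fun h => A3 (h ▸ hzA)) (fun h => A4 (h ▸ hzA)) hyu hyv hzA
    · exact fun h => ⟨y, hy, h⟩
  have PB : ∀ σ ∈ M.faces, v ∈ σ → ∀ y ∈ σ, y ≠ u → y ≠ v → ((∃ z ∈ σ, z ∈ B) ↔ y ∈ B) := by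
    intro σ hσ hu y hy hyu hyv
    constructor
    · rintro ⟨z, hz, hzA⟩
      exact B5 z y (triple_face hσ hu hz hy) (fun h => B3 (h ▸ hzA)) (fun h => B4 (h ▸ hzA)) hyv hyu hzA
    · exact fun h => ⟨y, hy, h⟩
  have PAB : ∀ σ ∈ M.faces, u ∈ σ → v ∈ σ → ((∃ z ∈ σ, z ∈ A) ↔ (∃ z ∈ σ, z ∈ B)) := by
    intro σ hσ hu hv
    constructor
    · rintro ⟨z, hz, hzA⟩
      rcases tri_unique hM huv h1 h2 h1u h1v h2u h2v h12 (triple_face hσ hu hv hz)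
        (fun h => A3 (h ▸ hzA)) (fun h => A4 (h ▸ hzA)) with rfl | rfl
      · exact ⟨z, hz, B1⟩
      · exact absurd hzA A2
    · rintro ⟨z, hz, hzA⟩
      rcases tri_unique hM huv h1 h2 h1u h1v h2u h2v h12 (triple_face hσ hu hv hz)
        (fun h => B4 (h ▸ hzA)) (fun h => B3 (h ▸ hzA)) with rfl | rfl
      · exact ⟨z, hz, A1⟩
      · exact absurd hzA B2
  let l : Finset V → V → ℤ := fun σ x =>
    if (x = u ∧ ∃ z ∈ σ, z ∈ A) ∨ (x = v ∧ ∃ z ∈ σ, z ∈ B) then 1 else 0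
  have lu : ∀ σ, l σ u = if ∃ z ∈ σ, z ∈ A then 1 else 0 := by intro σ; simp [l, huv]
  have lv : ∀ σ, l σ v = if ∃ z ∈ σ, z ∈ B then 1 else 0 := by intro σ; simp [l, huv.symm]
  have lx : ∀ σ x, x ≠ u → x ≠ v → l σ x = 0 := by intro σ x hxu hxv; simp [l, hxu, hxv]
  have hshare : ∀ σ ∈ M.faces, ∀ τ ∈ M.faces, ∀ x y, x ≠ y → x ∈ σ → x ∈ τ → y ∈ σ → y ∈ τ →
        ({x, y} : Finset V) ≠ {u, v} → l σ x = l τ x := by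
    intro σ hσ τ hτ x y hxy hxσ hxτ hyσ hyτ hne
    by_cases hxu : x = u
    · subst hxu
      have hyv : y ≠ v := fun h => hne (by rw [h])
      rw [lu, lu, if_congr (PA σ hσ hxσ y hyσ hxy.symm hyv) rfl rfl,
        if_congr (PA τ hτ hxτ y hyτ hxy.symm hyv) rfl rfl]
    by_cases hxv : x = v
    · subst hxv
      have hyu : y ≠ u := fun h => hne (by rw [h, pair_comm])
      rw [lv, lv, if_congr (PB σ hσ hxσ y hyσ hyu hxy.symm) rfl rfl,
        if_congr (PB τ hτ hxτ y hyτ hyu hxy.symm) rfl rfl]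
    rw [lx _ _ hxu hxv, lx _ _ hxu hxv]
  refine ⟨l, ?_, hshare, ?_, ?_⟩
  · intro σ hσ x hx y hy
    by_cases hxy : x = y
    · subst hxy; simp
    by_cases hne : ({x, y} : Finset V) = {u, v}
    · have hu : u ∈ ({x, y} : Finset V) := by rw [hne]; simp
      have hv : v ∈ ({x, y} : Finset V) := by rw [hne]; simp
      have key : ∀ τ ∈ M.faces, u ∈ τ → v ∈ τ → l τ u = l τ v := by
        intro τ hτ hu hv
        rw [lu, lv, if_congr (PAB τ hτ hu hv) rfl rfl]
      have hxyf := pair_face hσ hx hy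
      have hsub : ({x, y} : Finset V) ⊆ σ := by
        intro z hz
        simp only [mem_insert, mem_singleton] at hz
        rcases hz with rfl | rfl <;> assumption
      have k1 := key _ hxyf hu hv
      have k2 := key _ hσ (hsub hu) (hsub hv)
      simp only [mem_insert, mem_singleton] at hu hv
      rcases hu with rfl | rfl
      · rcases hv with rfl | rfl
        · exact absurd rfl huv
        · rw [k1, k2]; simp
      · rcases hv with rfl | rfl
        · rw [k1, k2]; simp
        · exact absurd rfl huv
    · have hxyf := pair_face hσ hx hy
      rw [hshare _ hxyf σ hσ x y hxy (by simp) hx (by simp) hy hne,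
        hshare _ hxyf σ hσ y x (Ne.symm hxy) (by simp) hy (by simp) hx (by rwa [pair_comm])]
  · rw [lu, if_pos ⟨w1, by simp, A1⟩]
  · rw [lu, if_neg]
    rintro ⟨z, hz, hzA⟩
    simp only [mem_insert, mem_singleton] at hz
    rcases hz with rfl | rfl | rfl
    · exact A3 hzA
    · exact A4 hzA
    · exact A2 hzA

/-- one dual step avoiding a set of edges -/
def Step (M : SComplex V) (B : Set (Finset V)) (T T' : Finset V) : Prop :=
  T ∈ M.faces ∧ T' ∈ M.faces ∧ T.card = 3 ∧ T'.card = 3 ∧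
    ∃ a b, a ≠ b ∧ a ∈ T ∧ b ∈ T ∧ a ∈ T' ∧ b ∈ T' ∧ ({a, b} : Finset V) ∉ B

theorem no_two_cycles (hM : M.IsMobius) (hn : M.NoInteriorVertices) {u v w1 w2 u' v' w1' w2' : V}
    (huv : u ≠ v) (h1 : {u, v, w1} ∈ M.faces) (h2 : {u, v, w2} ∈ M.faces)
    (h1u : w1 ≠ u) (h1v : w1 ≠ v) (h2u : w2 ≠ u) (h2v : w2 ≠ v) (h12 : w1 ≠ w2)
    (huv' : u' ≠ v') (h1' : {u', v', w1'} ∈ M.faces) (h2' : {u', v', w2'} ∈ M.faces)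
    (h1u' : w1' ≠ u') (h1v' : w1' ≠ v') (h2u' : w2' ≠ u') (h2v' : w2' ≠ v') (h12' : w1' ≠ w2')
    (hne : ({u, v} : Finset V) ≠ {u', v'})
    (hr : Relation.ReflTransGen (M.Step {{u, v}, {u', v'}}) {u, v, w1} {u, v, w2})
    (hr' : Relation.ReflTransGen (M.Step {{u, v}, {u', v'}}) {u', v', w1'} {u', v', w2'}) : False := by
  obtain ⟨l, l1, l2, l3, l4⟩ := side_fn hM hn huv h1 h2 h1u h1v h2u h2v h12
  obtain ⟨k, k1, k2, k3, k4⟩ := side_fn hM hn huv' h1' h2' h1u' h1v' h2u' h2v' h12'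
  obtain ⟨m, n, hmn, φ, hφ⟩ := cocycle hM (c := fun x y => l {x, y} x - l {x, y} y)
    (c' := fun x y => k {x, y} x - k {x, y} y) l1 k1
  have hconst : ∀ σ ∈ M.faces, ∀ x ∈ σ, ∀ y ∈ σ,
      φ x - m * l σ x - n * k σ x = φ y - m * l σ y - n * k σ y := by
    intro σ hσ x hx y hy
    have := hφ x y (pair_face hσ hx hy)
    simp only [l1 σ hσ x hx y hy, k1 σ hσ x hx y hy] at this
    linarith
  have hpath : ∀ T T', Relation.ReflTransGen (M.Step {{u, v}, {u', v'}}) T T' → T ∈ M.faces →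
      ∀ x ∈ T, ∀ y ∈ T', φ x - m * l T x - n * k T x = φ y - m * l T' y - n * k T' y := by
    intro T T' h hT x hx
    induction h with
    | refl => exact fun y hy => hconst T hT x hx y hy
    | tail _ hs ih =>
      intro y hy
      obtain ⟨hf, hf', -, -, a, b, hab, ha, hb, ha', hb', hB⟩ := hs
      simp only [Set.mem_insert_iff, Set.mem_singleton_iff, not_or] at hB
      rw [ih a ha, ← hconst _ hf' a ha' y hy, l2 _ hf _ hf' a b hab ha ha' hb hb' hB.1,
        k2 _ hf _ hf' a b hab ha ha' hb hb' hB.2]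
  have p1 := hpath _ _ hr h1 u (by simp) u (by simp)
  have p2 := hpath _ _ hr' h1' u' (by simp) u' (by simp)
  rw [l3, l4, k2 _ h1 _ h2 u v huv (by simp) (by simp) (by simp) (by simp) hne] at p1
  rw [k3, k4, l2 _ h1' _ h2' u' v' huv' (by simp) (by simp) (by simp) (by simp) hne.symm] at p2
  omega

end SComplex

open Finset
open scoped Topology

namespace SComplex
variable {V : Type} [DecidableEq V] [Fintype V] {M : SComplex V}

theorem ear_niv (hM : M.IsMobius) (hn : M.NoInteriorVertices) {u v w d : V}
    (huv : u ≠ v) (huw : u ≠ w) (hud : u ≠ d) (hvw : v ≠ w) (hvd : v ≠ d) (hwd : w ≠ d)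
    (hT : {u, v, w} ∈ M.faces) (hT' : {u, v, d} ∈ M.faces)
    (hi1 : ¬ M.InteriorEdge {u, w}) (hi2 : ¬ M.InteriorEdge {v, w}) :
    (M.del w).IsMobius ∧ (M.del w).NoInteriorVertices := by
  have hT3 : ({u, v, w} : Finset V).card = 3 := card_tri huv huw.symm hvw.symm
  have key : ∀ T ∈ M.faces, T.card = 3 → w ∈ T → (u ∈ T ∨ v ∈ T) → T = {u, v, w} := by
    intro T hTf h3 hw h
    by_contra hne
    rcases h with h | h
    · exact hi1 (int_of_tri hM huw hTf hT h3 hT3 h hw (by simp) (by simp) hne)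
    · exact hi2 (int_of_tri hM hvw hTf hT h3 hT3 h hw (by simp) (by simp) hne)
  have hw : ∀ σ ∈ M.faces, w ∈ σ → σ ⊆ {u, v, w} := by
    intro σ hσ hwσ x hx
    by_cases hxw : x = w
    · simp [hxw]
    have hxA : x ∈ ({u, v} : Set V) := by
      refine link_conn hM w {u, v} ?_ huw hxw (pair_face hT (by simp) (by simp))
        (pair_face hσ hwσ hx) (by simp)
      intro x y hx hy hf hxA
      by_cases hxy : x = y
      · exact hxy ▸ hxA
      have h3 : ({w, x, y} : Finset V).card = 3 := card_tri hx.symm hy (Ne.symm hxy)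
      have := key _ hf h3 (by simp) (by rcases hxA with rfl | rfl <;> simp)
      have hy' : y ∈ ({u, v, w} : Finset V) := this ▸ (by simp)
      simp at hy'
      simp; tauto
    simp at hxA ⊢; tauto
  have hE : ∀ σ ∈ M.faces, u ∈ σ → v ∈ σ → σ ⊆ {u, v, w} ∨ σ ⊆ {u, v, d} := by
    intro σ hσ hu hv
    by_cases hwσ : w ∈ σ
    · exact Or.inl (hw σ hσ hwσ)
    right
    intro x hx
    by_cases hxu : x = u
    · simp [hxu]
    by_cases hxv : x = v
    · simp [hxv]
    rcases tri_unique hM huv hT hT' huw.symm hvw.symm hud.symm hvd.symm hwd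
      (triple_face hσ hu hv hx) hxu hxv with h | h
    · exact absurd (h ▸ hx) hwσ
    · simp [h]
  refine ⟨ear_mobius hM huv huw hud hvw hvd hwd hT hT' hw hE, ?_⟩
  have hfe := filter_eq hM huv hT hT' huw.symm hvw.symm hud.symm hvd.symm hwd
  intro x hx
  rw [mem_vertices] at hx
  have hx' := (mem_filter.1 hx)
  have hxw : w ≠ x := by simpa using hx'.2
  obtain ⟨e, he, hxe, he2, he1⟩ := hn x (mem_vertices.2 hx'.1)
  by_cases hwe : w ∈ e
  · have hxT := hw e he hwe hxe
    have hxuv : x = u ∨ x = v := by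
      simp at hxT
      rcases hxT with h | h | h
      · exact Or.inl h
      · exact Or.inr h
      · exact absurd h.symm hxw
    refine ⟨{u, v}, mem_filter.2 ⟨pair_face hT (by simp) (by simp), by simp [huw.symm, hvw.symm]⟩,
      by simpa using hxuv, card_pair huv, ?_⟩
    rw [card_eq_one]
    refine ⟨{u, v, d}, ?_⟩
    ext τ
    simp only [del, mem_filter, mem_singleton]
    constructor
    · rintro ⟨⟨h1, h2⟩, h3, h4⟩
      have : τ ∈ M.faces.filter fun τ => τ.card = 3 ∧ {u, v} ⊆ τ := mem_filter.2 ⟨h1, h3, h4⟩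
      rw [hfe] at this
      simp at this
      rcases this with rfl | h
      · simp at h2
      · exact h
    · rintro rfl
      refine ⟨⟨hT', by simp [huw.symm, hvw.symm, hwd]⟩, card_tri huv hud.symm hvd.symm, ?_⟩
      intro z; simp; tauto
  · refine ⟨e, mem_filter.2 ⟨he, hwe⟩, hxe, he2, ?_⟩
    rw [← he1]
    congr 1
    ext τ
    simp only [del, mem_filter]
    constructor
    · rintro ⟨⟨h1, h2⟩, h3⟩; exact ⟨h1, h3⟩
    · rintro ⟨h1, h3, h4⟩
      refine ⟨⟨h1, fun hwτ => ?_⟩, h3, h4⟩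
      have hsub : e ⊆ {u, v} := by
        intro z hz
        have := hw τ h1 hwτ (h4 hz)
        have hzw : z ≠ w := fun h => hwe (h ▸ hz)
        simp at this ⊢; tauto
      have heq : e = {u, v} := eq_of_subset_of_card_le hsub (by rw [card_pair huv, he2])
      rw [heq, hfe, card_pair (tri_ne huw.symm hvw.symm hwd)] at he1
      omega

end SComplex

open Finset
open scoped Topology

namespace SComplex
variable {V : Type} [DecidableEq V] [Fintype V] {M : SComplex V}

def HasCycle (N : SComplex V) (e : Finset V) : Prop :=
  ∃ u v w1 w2 : V, u ≠ v ∧ w1 ≠ u ∧ w1 ≠ v ∧ w2 ≠ u ∧ w2 ≠ v ∧ w1 ≠ w2 ∧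
    {u, v, w1} ∈ N.faces ∧ {u, v, w2} ∈ N.faces ∧ ({u, v} : Finset V) ≠ e ∧
    Relation.ReflTransGen (N.Step {{u, v}}) {u, v, w1} {u, v, w2}

theorem sep_symm {M₁ M₂ : SComplex V} {e : Finset V} (h : M.SeparationAlong M₁ M₂ e) :
    M.SeparationAlong M₂ M₁ e := by
  obtain ⟨h1, h2, h3, h4⟩ := h
  exact ⟨by rw [union_comm]; exact h1, by rw [inter_comm]; exact h2, h4, h3⟩

theorem sep_left {M₁ M₂ : SComplex V} {e τ : Finset V} (h : M.SeparationAlong M₁ M₂ e)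
    (hτ : τ ∈ M₁.faces) : τ ∈ M.faces := by
  rw [← h.1]; exact mem_union_left _ hτ

theorem sep_inter {M₁ M₂ : SComplex V} {e τ : Finset V} (h : M.SeparationAlong M₁ M₂ e)
    (hτ : τ ∈ M₁.faces) (hτ' : τ ∈ M₂.faces) : τ ⊆ e := by
  have : τ ∈ M₁.faces ∩ M₂.faces := mem_inter.2 ⟨hτ, hτ'⟩
  rw [h.2.1] at this
  exact mem_powerset.1 (mem_filter.1 this).1

theorem sep_pair {M₁ M₂ : SComplex V} {e : Finset V} (h : M.SeparationAlong M₁ M₂ e)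
    (he : M.InteriorEdge e) {a b : V} (hab : a ≠ b)
    (hτ : {a, b} ∈ M₁.faces) (hτ' : {a, b} ∈ M₂.faces) : ({a, b} : Finset V) = e :=
  eq_of_subset_of_card_le (sep_inter h hτ hτ') (by rw [card_pair hab, he.2.1])

theorem no_both (hM : M.IsMobius) (hn : M.NoInteriorVertices) {M₁ M₂ : SComplex V} {e : Finset V}
    (h : M.SeparationAlong M₁ M₂ e) (he : M.InteriorEdge e)
    (c1 : M₁.HasCycle e) (c2 : M₂.HasCycle e) : False := by
  obtain ⟨u, v, w1, w2, huv, h1u, h1v, h2u, h2v, h12, f1, f2, hne, hr⟩ := c1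
  obtain ⟨u', v', w1', w2', huv', h1u', h1v', h2u', h2v', h12', f1', f2', hne', hr'⟩ := c2
  have g1 : {u, v} ∈ M₁.faces := pair_face f1 (by simp) (by simp)
  have g2 : {u', v'} ∈ M₂.faces := pair_face f1' (by simp) (by simp)
  have hs := sep_symm h
  refine no_two_cycles hM hn huv (sep_left h f1) (sep_left h f2) h1u h1v h2u h2v h12
    huv' (sep_left hs f1') (sep_left hs f2') h1u' h1v' h2u' h2v' h12' ?_ ?_ ?_
  · intro heq
    exact hne (sep_pair h he huv g1 (heq ▸ g2))
  · refine Relation.ReflTransGen.mono ?_ _ _ hr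
    rintro T T' ⟨t1, t2, t3, t4, a, b, hab, ha, hb, ha', hb', hB⟩
    refine ⟨sep_left h t1, sep_left h t2, t3, t4, a, b, hab, ha, hb, ha', hb', ?_⟩
    rintro (hh | hh)
    · exact hB hh
    · have q : ({a, b} : Finset V) = {u', v'} := hh
      exact hne' (q ▸ sep_pair h he hab (pair_face t1 ha hb) (q ▸ g2))
  · refine Relation.ReflTransGen.mono ?_ _ _ hr'
    rintro T T' ⟨t1, t2, t3, t4, a, b, hab, ha, hb, ha', hb', hB⟩
    refine ⟨sep_left hs t1, sep_left hs t2, t3, t4, a, b, hab, ha, hb, ha', hb', ?_⟩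
    rintro (hh | hh)
    · have q : ({a, b} : Finset V) = {u, v} := hh
      exact hne (q ▸ sep_pair h he hab (q ▸ g1) (pair_face t1 ha hb))
    · exact hB hh

theorem tri_three {ε X Y T : Finset V} (hε : M.InteriorEdge ε) (hX : X ∈ M.faces)
    (hY : Y ∈ M.faces) (hT : T ∈ M.faces) (hX3 : X.card = 3) (hY3 : Y.card = 3) (hT3 : T.card = 3)
    (hXe : ε ⊆ X) (hYe : ε ⊆ Y) (hTe : ε ⊆ T) : X = Y ∨ X = T ∨ Y = T := by
  by_contra! hc
  have : 2 < (M.faces.filter fun τ => τ.card = 3 ∧ ε ⊆ τ).card := two_lt_card.2 ⟨X, mem_filter.2 ⟨hX, hX3, hXe⟩, Y, mem_filter.2 ⟨hY, hY3, hYe⟩,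
    T, mem_filter.2 ⟨hT, hT3, hTe⟩, hc.1, hc.2.1, hc.2.2⟩
  rw [hε.2.2] at this
  omega

theorem sep_both (hM : M.IsMobius) (hn : M.NoInteriorVertices) {M₁ M₂ : SComplex V} {e : Finset V}
    (h : M.SeparationAlong M₁ M₂ e) (he : M.InteriorEdge e) :
    ∃ T₁ ∈ M₁.faces, ∃ T₂ ∈ M₂.faces, T₁.card = 3 ∧ T₂.card = 3 ∧ e ⊆ T₁ ∧ e ⊆ T₂ := by
  by_contra! hc
  obtain ⟨A, hA, hA3⟩ := h.2.2.1
  obtain ⟨B, hB, hB3⟩ := h.2.2.2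
  have hBS : B ∈ {T | T ∈ M₁.faces ∧ T.card = 3} := by
    refine strong_conn hM hn _ (fun T hT => ⟨sep_left h hT.1, hT.2⟩) ?_ ⟨hA, hA3⟩
      (sep_left (sep_symm h) hB) hB3
    rintro T ⟨hT, hT3⟩ T' hT' hT3' a b hab ha hb ha' hb'
    refine ⟨?_, hT3'⟩
    by_contra hT1
    have hT2 : T' ∈ M₂.faces := by
      rw [← h.1] at hT'
      exact (mem_union.1 hT').resolve_left hT1
    have hh := sep_pair h he hab (pair_face hT ha hb) (pair_face hT2 ha' hb')
    refine hc T hT T' hT2 hT3 hT3' ?_ ?_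
    · rw [← hh]; intro z; simp; rintro (rfl | rfl) <;> assumption
    · rw [← hh]; intro z; simp; rintro (rfl | rfl) <;> assumption
  have := card_le_card (sep_inter h hBS.1 hB)
  rw [hB3, he.2.1] at this
  omega

def HasEar (M : SComplex V) : Prop :=
  ∃ u v w d : V, u ≠ v ∧ u ≠ w ∧ u ≠ d ∧ v ≠ w ∧ v ≠ d ∧ w ≠ d ∧
    {u, v, w} ∈ M.faces ∧ {u, v, d} ∈ M.faces ∧
    ¬ M.InteriorEdge {u, w} ∧ ¬ M.InteriorEdge {v, w}

theorem exists_ear (hM : M.IsMobius) (hn : M.NoInteriorVertices) {M₁ M₂ : SComplex V}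
    {e : Finset V} (h : M.SeparationAlong M₁ M₂ e) (he : M.InteriorEdge e)
    (hc : ¬ M₂.HasCycle e) : M.HasEar := by
  obtain ⟨T₁, hT₁, T₂, hT₂, h13, h23, he1, he2⟩ := sep_both hM hn h he
  have hs := sep_symm h
  have huniq : ∀ T ∈ M₂.faces, T.card = 3 → e ⊆ T → T = T₂ := by
    intro T hT hT3 heT
    have big : ∀ X ∈ M₂.faces, X.card = 3 → T₁ ≠ X := by
      rintro X hX hX3 rfl
      have := card_le_card (sep_inter h hT₁ hX)
      rw [hX3, he.2.1] at this
      omega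
    rcases tri_three he (sep_left h hT₁) (sep_left hs hT) (sep_left hs hT₂) h13 hT3 h23 he1 heT he2
      with q | q | q
    · exact absurd q (big _ hT hT3)
    · exact absurd q (big _ hT₂ h23)
    · exact q
  let S : Finset V → Finset V → Set (Finset V) := fun ε T =>
    {X | X ∈ M₂.faces ∧ Relation.ReflTransGen (M₂.Step {ε}) T X}
  have hfin : ∀ ε T, (S ε T).Finite := fun ε T =>
    M₂.faces.finite_toSet.subset (fun X hX => hX.1)
  suffices H : ∀ n : ℕ, ∀ ε T, T ∈ M₂.faces → T.card = 3 → ε ⊆ T → M.InteriorEdge ε →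
      (ε = e ∨ T₂ ∉ S ε T) → (S ε T).ncard = n → M.HasEar from
    H _ e T₂ hT₂ h23 he2 he (Or.inl rfl) rfl
  intro n
  induction n using Nat.strong_induction_on with
  | _ n ih =>
  intro ε T hT hT3 hεT hε hor hcard
  have hTS : T ∈ S ε T := ⟨hT, Relation.ReflTransGen.refl⟩
  have claim : ∀ η, M.InteriorEdge η → η ⊆ T → η ≠ ε → M.HasEar := by
    intro η hη hηT hηε
    have hηe : η ≠ e := by
      rintro rfl
      rcases hor with q | q
      · exact hηε q.symm
      · exact q (huniq T hT hT3 hηT ▸ hTS)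
    obtain ⟨a, b, w1, w2, hab, h1a, h1b, h2a, h2b, h12, rfl, f1, f2, rfl⟩ :=
      int_elim hη (sep_left hs hT) hT3 hηT
    have f2' : {a, b, w2} ∈ M₂.faces := by
      by_contra hno
      have : {a, b, w2} ∈ M₁.faces := by
        rw [← h.1] at f2
        exact (mem_union.1 f2).resolve_right hno
      exact hηe (sep_pair h he hab (pair_face this (by simp) (by simp))
        (pair_face hT (by simp) (by simp)))
    have h3' : ({a, b, w2} : Finset V).card = 3 := card_tri hab h2a h2b
    have hTn : ({a, b, w1} : Finset V) ∉ S {a, b} {a, b, w2} := fun hh =>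
      hc ⟨a, b, w2, w1, hab, h2a, h2b, h1a, h1b, h12.symm, f2', hT, hηe, hh.2⟩
    have hsub : S {a, b} {a, b, w2} ⊆ S ε {a, b, w1} := by
      rintro X ⟨hX, hr⟩
      refine ⟨hX, ?_⟩
      clear hX
      induction hr with
      | refl =>
        exact Relation.ReflTransGen.single ⟨hT, f2', hT3, h3', a, b, hab, by simp, by simp,
          by simp, by simp, hηε⟩
      | @tail X Y hr hst ihr =>
        obtain ⟨t1, t2, t3, t4, p, q, hpq, hp, hq, hp', hq', hB⟩ := hst
        by_cases hpe : ({p, q} : Finset V) = ε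
        · have hεX : ε ⊆ X := by
            rw [← hpe]; intro z; simp; rintro (rfl | rfl) <;> assumption
          have hεY : ε ⊆ Y := by
            rw [← hpe]; intro z; simp; rintro (rfl | rfl) <;> assumption
          rcases tri_three hε (sep_left hs t1) (sep_left hs t2) f1 t3 t4 hT3 hεX hεY hεT
            with k | k | k
          · exact k ▸ ihr
          · exact absurd ⟨hT, k ▸ hr⟩ hTn
          · rw [k]
        · exact ihr.tail ⟨t1, t2, t3, t4, p, q, hpq, hp, hq, hp', hq', hpe⟩
    have hlt : (S {a, b} {a, b, w2}).ncard < n := by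
      rw [← hcard]
      exact Set.ncard_lt_ncard ⟨hsub, fun hh => hTn (hh hTS)⟩ (hfin _ _)
    refine ih _ hlt {a, b} {a, b, w2} f2' h3' (by intro z; simp; tauto) hη (Or.inr ?_) rfl
    rcases hor with q | q
    · have := huniq _ hT hT3 (q ▸ hεT)
      exact this ▸ hTn
    · exact fun hh => q (hsub hh)
  obtain ⟨u, v, w, d, huv, hwu, hwv, hdu, hdv, hwd, rfl, f1, f2, rfl⟩ :=
    int_elim hε (sep_left hs hT) hT3 hεT
  by_cases i1 : M.InteriorEdge {u, w}
  · refine claim _ i1 (by intro z; simp; tauto) ?_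
    intro hh
    have : w ∈ ({u, v} : Finset V) := hh ▸ (by simp)
    simp at this; tauto
  by_cases i2 : M.InteriorEdge {v, w}
  · refine claim _ i2 (by intro z; simp; tauto) ?_
    intro hh
    have : w ∈ ({u, v} : Finset V) := hh ▸ (by simp)
    simp at this; tauto
  exact ⟨u, v, w, d, huv, hwu.symm, hdu.symm, hwv.symm, hdv.symm, hwd, f1, f2, i1, i2⟩

theorem core_aux (n : ℕ) : ∀ M : SComplex V, M.faces.card = n → M.IsMobius →
    M.NoInteriorVertices →
    ∃ M' : SComplex V, M'.faces ⊆ M.faces ∧ M'.IsMobius ∧ M'.NoInteriorVertices ∧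
      ∀ e, M'.InteriorEdge e → ¬ M'.Separates e := by
  induction n using Nat.strong_induction_on with
  | _ n ih =>
  intro M hcard hM hn
  by_cases hall : ∀ e, M.InteriorEdge e → ¬ M.Separates e
  · exact ⟨M, Subset.rfl, hM, hn, hall⟩
  push Not at hall
  obtain ⟨e, he, M₁, M₂, h⟩ := hall
  have hear : M.HasEar := by
    by_cases c2 : M₂.HasCycle e
    · by_cases c1 : M₁.HasCycle e
      · exact (no_both hM hn h he c1 c2).elim
      · exact exists_ear hM hn (sep_symm h) he c1
    · exact exists_ear hM hn h he c2
  obtain ⟨u, v, w, d, huv, huw, hud, hvw, hvd, hwd, f1, f2, i1, i2⟩ := hear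
  obtain ⟨g1, g2⟩ := ear_niv hM hn huv huw hud hvw hvd hwd f1 f2 i1 i2
  have hsub : (M.del w).faces ⊆ M.faces := filter_subset _ _
  have hlt : (M.del w).faces.card < n := by
    rw [← hcard]
    refine card_lt_card ⟨hsub, fun hh => ?_⟩
    have := (mem_filter.1 (hh f1)).2
    simp at this
  obtain ⟨M', a, b, c, d⟩ := ih _ hlt (M.del w) rfl g1 g2
  exact ⟨M', a.trans hsub, b, c, d⟩

end SComplex

/-- a triangulated Möbius strip `M` with no interior vertices has an
interior edge, and (by repeatedly cutting along separating interior edges) contains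
a subcomplex `M'` which is a Möbius strip without interior vertices, all of whose
interior edges are non-separating. -/
theorem mobius_has_nonseparating_core {V : Type} [DecidableEq V] [Fintype V]
    (M : SComplex V) (hM : M.IsMobius) (hniv : M.NoInteriorVertices) :
    (∃ e, M.InteriorEdge e) ∧
    ∃ M' : SComplex V, M'.faces ⊆ M.faces ∧ M'.IsMobius ∧ M'.NoInteriorVertices ∧
      ∀ e, M'.InteriorEdge e → ¬ M'.Separates e := by
  exact ⟨SComplex.exists_interior hM hniv, SComplex.core_aux _ M rfl hM hniv⟩
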